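/- There exists δ₀ > 0 such that for every δ ∈ (0, δ₀) there is a constant C(δ) with the following property: for all sufficiently large X, setting D = X^{5/9}, z = X^{5/36}, w = X^δ, E = X^{1/1000}, one has Σ_{d ≤ DE} d·( Σ_{m ≤ DE, d | m} α_m⁻/m )² ≤ C(δ)/log X. -/

import Mathlib

open scoped Classical

/-- Generic (β-)sieve weight: for squarefree `d = p₁⋯p_r` with primes
`lo ≤ p_r < ⋯ < p₁ < hi` satisfying `p₁⋯p_m·p_m^β < lvl` for all `m ≤ r` of the
prescribed parity (odd if `useOdd`, even otherwise), the weight is `μ(d)`;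
otherwise it is `0` (and `1` gets weight `μ(1) = 1`). With `β = 2` these are the
linear sieve weights `λ^±`, with `β = 30` the β-sieve weights `ρ^±`. -/
noncomputable def sieveWeight (lo hi lvl : ℝ) (β : ℕ) (useOdd : Bool) (d : ℕ) : ℝ :=
  if Squarefree d ∧ (∀ p ∈ d.primeFactors, lo ≤ (p : ℝ) ∧ (p : ℝ) < hi) ∧
      (∀ m : ℕ, 1 ≤ m → m ≤ d.primeFactorsList.length →
        (if useOdd then Odd m else Even m) →
        (((d.primeFactorsList.reverse.take m).prod : ℕ) : ℝ) *
          ((d.primeFactorsList.reverse.getD (m - 1) 1 : ℕ) : ℝ) ^ β < lvl)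
  then (ArithmeticFunction.moebius d : ℝ) else 0

/-- `(k, P(lo,hi))`: the product of the distinct primes `p ∣ k` with `lo ≤ p < hi`. -/
noncomputable def gcdPart (lo hi : ℝ) (k : ℕ) : ℕ :=
  ∏ p ∈ k.primeFactors.filter (fun p : ℕ => lo ≤ (p : ℝ) ∧ (p : ℝ) < hi), p

/-- `k ∣ P(z)`: `k` is squarefree with all prime factors `< z`. -/
def dividesPrimorial (z : ℝ) (k : ℕ) : Prop :=
  Squarefree k ∧ ∀ p ∈ k.primeFactors, (p : ℝ) < z

/-- The lower-bound vector-sieve weight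
`α_k⁻ = 1_{k ∣ P(z)}(λ⁺_{(k,P(w,z))}ρ⁻_{(k,P(w))} + λ⁻_{(k,P(w,z))}ρ⁺_{(k,P(w))}
  − λ⁺_{(k,P(w,z))}ρ⁺_{(k,P(w))})`. -/
noncomputable def alphaMinus (w z D E : ℝ) (k : ℕ) : ℝ :=
  (if dividesPrimorial z k then 1 else 0) *
    (sieveWeight w z D 2 true (gcdPart w z k) * sieveWeight 0 w E 30 false (gcdPart 0 w k)
      + sieveWeight w z D 2 false (gcdPart w z k) * sieveWeight 0 w E 30 true (gcdPart 0 w k)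
      - sieveWeight w z D 2 true (gcdPart w z k) * sieveWeight 0 w E 30 true (gcdPart 0 w k))


lemma aux_logfac (N : ℕ) :
    ∑ p ∈ Nat.primesBelow (N+1), Real.log p * ((N / p : ℕ) : ℝ) ≤ N * Real.log N := by
  have h1 : ∀ k ∈ Finset.Ioc 0 N, ∑ p ∈ (Nat.primesBelow (N+1)).filter (· ∣ k), Real.log p ≤ Real.log N := by
    intro k hk
    simp only [Finset.mem_Ioc] at hk
    have hf : (Nat.primesBelow (N+1)).filter (· ∣ k) = k.primeFactors := by
      ext p
      simp only [Finset.mem_filter, Nat.mem_primesBelow, Nat.mem_primeFactors]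
      constructor
      · rintro ⟨⟨_, h⟩, h'⟩; exact ⟨h, h', by omega⟩
      · rintro ⟨h, h', _⟩
        have := Nat.le_of_dvd hk.1 h'
        exact ⟨⟨by omega, h⟩, h'⟩
    rw [hf, ← Real.log_prod (fun p hp => by exact_mod_cast (Nat.prime_of_mem_primeFactors hp).ne_zero)]
    apply Real.log_le_log
    · exact Finset.prod_pos fun p hp => by exact_mod_cast (Nat.prime_of_mem_primeFactors hp).pos
    · have := Nat.le_of_dvd hk.1 (Nat.prod_primeFactors_dvd k)
      calc (∏ p ∈ k.primeFactors, (p:ℝ)) = ((∏ p ∈ k.primeFactors, p : ℕ) : ℝ) := by push_cast; rfl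
        _ ≤ N := by exact_mod_cast this.trans hk.2
  have h2 := Finset.sum_le_sum h1
  rw [Finset.sum_const, Nat.card_Ioc, nsmul_eq_mul, Nat.sub_zero] at h2
  refine le_trans (le_of_eq ?_) h2
  simp_rw [Finset.sum_filter]
  rw [Finset.sum_comm]
  refine Finset.sum_congr rfl fun p hp => ?_
  rw [← Finset.sum_filter, Finset.sum_const, Nat.Ioc_filter_dvd_card_eq_div, nsmul_eq_mul, mul_comm]

lemma sum_log_div_le (N : ℕ) (hN : 1 ≤ N) :
    ∑ p ∈ Nat.primesBelow N, Real.log p / p ≤ Real.log N + Real.log 4 := by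
  have hN' : (0:ℝ) < N := by exact_mod_cast hN
  have h1 := aux_logfac N
  have hth : ∑ p ∈ Nat.primesBelow (N+1), Real.log p ≤ Real.log 4 * N := by
    have := Chebyshev.theta_le_log4_mul_x (x := (N:ℝ)) hN'.le
    rw [Chebyshev.theta_eq_sum_primesLE_log] at this
    exact this
  have h3 : ∑ p ∈ Nat.primesBelow (N+1), Real.log p / p * N ≤
      ∑ p ∈ Nat.primesBelow (N+1), (Real.log p * ((N / p : ℕ) : ℝ) + Real.log p) := by
    refine Finset.sum_le_sum fun p hp => ?_
    have hp := Nat.prime_of_mem_primesBelow hp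
    have hp0 : (0:ℝ) < p := by exact_mod_cast hp.pos
    have : (N:ℝ)/p ≤ ((N / p : ℕ) : ℝ) + 1 := by
      have := Nat.lt_div_mul_add (a := N) hp.pos
      rw [div_le_iff₀ hp0]
      have h : N ≤ (N/p + 1) * p := by nlinarith
      exact_mod_cast h
    have hl : 0 ≤ Real.log p := Real.log_natCast_nonneg p
    calc Real.log p / p * N = Real.log p * (N/p) := by ring
      _ ≤ Real.log p * (((N / p : ℕ) : ℝ) + 1) := by gcongr
      _ = _ := by ring
  rw [Finset.sum_add_distrib, ← Finset.sum_mul] at h3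
  have h4 : ∑ p ∈ Nat.primesBelow (N+1), Real.log p / p ≤ Real.log N + Real.log 4 := by
    by_contra! h
    nlinarith
  refine le_trans (Finset.sum_le_sum_of_subset_of_nonneg ?_ ?_) h4
  · intro p; simp only [Nat.mem_primesBelow]; rintro ⟨a, b⟩; exact ⟨by omega, b⟩
  · intro p _ _; exact div_nonneg (Real.log_natCast_nonneg p) (Nat.cast_nonneg p)

/-- The Mertens product. -/
noncomputable def VV (N : ℕ) : ℝ := ∏ p ∈ Nat.primesBelow N, (1 - 1 / (p:ℝ))

lemma one_sub_inv_pos {p : ℕ} (hp : p.Prime) : 0 < 1 - 1 / (p:ℝ) := by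
  have : (2:ℝ) ≤ p := by exact_mod_cast hp.two_le
  rw [sub_pos, div_lt_one (by linarith)]; linarith

lemma VV_pos (N : ℕ) : 0 < VV N :=
  Finset.prod_pos fun p hp => one_sub_inv_pos (Nat.prime_of_mem_primesBelow hp)

lemma VV_upper (N : ℕ) (hN : 2 ≤ N) : VV N ≤ 1 / Real.log N := by
  have hlog : 0 < Real.log N := Real.log_pos (by exact_mod_cast hN)
  let f : ℕ →* ℝ := { toFun := fun n => (n:ℝ)⁻¹, map_one' := by simp, map_mul' := by intros; simp [mul_comm] }
  have h := EulerProduct.summable_and_hasSum_smoothNumbers_prod_primesBelow_geometric (f := f)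
    (by
      intro p hp
      have : (2:ℝ) ≤ p := by exact_mod_cast hp.two_le
      simp only [f, MonoidHom.coe_mk, OneHom.coe_mk, norm_inv, RCLike.norm_natCast]
      exact inv_lt_one_of_one_lt₀ (by linarith)) N
  obtain ⟨hs, hsum⟩ := h
  have hprod : ∏ p ∈ N.primesBelow, (1 - f p)⁻¹ = (VV N)⁻¹ := by
    rw [VV, ← Finset.prod_inv_distrib]
    refine Finset.prod_congr rfl fun p _ => ?_
    simp [f]
  rw [hprod] at hsum
  have hge : Real.log N ≤ (VV N)⁻¹ := by
    have h1 : Real.log N ≤ (harmonic (N-1) : ℝ) := by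
      have := log_add_one_le_harmonic (N-1)
      rwa [Nat.sub_add_cancel (by omega)] at this
    have hmem : ∀ i ∈ Finset.range (N-1), (i+1) ∈ N.smoothNumbers := by
      intro i hi
      rw [Finset.mem_range] at hi
      exact Nat.mem_smoothNumbers_of_lt (by omega) (by omega)
    have h2 : (harmonic (N-1) : ℝ) ≤ (VV N)⁻¹ := by
      have h3 := hsum.summable.hasSum
      let s : Finset N.smoothNumbers := (Finset.range (N-1)).attach.image (fun i => ⟨i.1+1, hmem i.1 i.2⟩)
      have h4 := sum_le_hasSum s (fun i _ => by simp [f]) hsum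
      refine le_trans (le_of_eq ?_) h4
      rw [Finset.sum_image (by rintro ⟨a,_⟩ _ ⟨b,_⟩ _ hab; simpa using hab)]
      rw [harmonic]
      push_cast
      rw [← Finset.sum_attach]
      simp [f]
    exact h1.trans h2
  rw [le_div_iff₀ hlog]
  have := VV_pos N
  calc VV N * Real.log N ≤ VV N * (VV N)⁻¹ := by gcongr
    _ = 1 := mul_inv_cancel₀ this.ne'

lemma zeta_le {s : ℝ} (hs : 1 < s) : (∑' n : ℕ, 1 / (n + 1 : ℝ) ^ s) ≤ 1 + 1 / (s - 1) := by
  have h := ZetaAsymptotics.zeta_limit_aux1 hs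
  have : 0 ≤ ZetaAsymptotics.termTSum s := tsum_nonneg fun n => ZetaAsymptotics.term_nonneg _ _
  nlinarith

lemma VV_lower : ∃ c : ℝ, 0 < c ∧ ∀ N : ℕ, 2 ≤ N → c / Real.log N ≤ VV N := by
  refine ⟨(Real.exp (2 * (1 + Real.log 4 / Real.log 2)) * (1 + 1/ Real.log 2))⁻¹, ?_, ?_⟩
  · have : 0 < Real.log 2 := Real.log_pos (by norm_num)
    positivity
  intro N hN
  have hl2 : 0 < Real.log 2 := Real.log_pos (by norm_num)
  have hlog : Real.log 2 ≤ Real.log N := Real.log_le_log (by norm_num) (by exact_mod_cast hN)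
  have hlog0 : 0 < Real.log N := by linarith
  set ε := 1 / Real.log N with hε
  have hε0 : 0 < ε := by positivity
  have hs : 1 < 1 + ε := by linarith
  let f : ℕ →*₀ ℝ := { toFun := fun n => (n:ℝ) ^ (-(1+ε)), map_zero' := by simp; rw [Real.zero_rpow (by linarith)], map_one' := by simp, map_mul' := by intros; push_cast; rw [Real.mul_rpow (by positivity) (by positivity)] }
  have hf : ∀ n, f n = (n:ℝ) ^ (-(1+ε)) := fun n => rfl
  have hsum : Summable f := by
    have := Real.summable_nat_rpow (p := -(1+ε)) |>.2 (by linarith)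
    exact this
  have hE := EulerProduct.prod_primesBelow_geometric_eq_tsum_smoothNumbers (f := (f : ℕ →* ℝ)) hsum N
  have hz : ∑' m : N.smoothNumbers, f m ≤ 1 + 1 / ε := by
    have h1 : ∑' m : N.smoothNumbers, f m ≤ ∑' n, f n :=
      Summable.tsum_subtype_le f _ (fun n => by rw [hf]; positivity) hsum
    have h2 : ∑' n, f n = ∑' n : ℕ, 1 / (n + 1 : ℝ) ^ (1+ε) := by
      rw [hsum.tsum_eq_zero_add]
      rw [map_zero, zero_add]
      refine tsum_congr fun n => ?_
      rw [hf, Real.rpow_neg (by positivity)]; push_cast; rw [one_div]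
    have h3 := zeta_le hs
    rw [h2] at h1
    rw [add_sub_cancel_left] at h3
    exact h1.trans h3
  have hfac : ∀ p ∈ N.primesBelow, (1 - 1 / (p:ℝ))⁻¹ ≤ (1 - f p)⁻¹ * Real.exp (2 * ε * (Real.log p / p)) := by
    intro p hp
    have hp := Nat.prime_of_mem_primesBelow hp
    have hp2 : (2:ℝ) ≤ p := by exact_mod_cast hp.two_le
    have hpos := one_sub_inv_pos hp
    have hfp : f p = 1 / p * Real.exp (-(ε * Real.log p)) := by
      rw [hf, neg_add, Real.rpow_add (by linarith), Real.rpow_neg_one, one_div, Real.rpow_def_of_pos (by linarith)]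
      congr 2; ring
    have hle : Real.exp (-(ε * Real.log p)) ≤ 1 := Real.exp_le_one_iff.2 (by
      have : 0 ≤ Real.log p := Real.log_natCast_nonneg p
      have := mul_nonneg hε0.le this
      linarith)
    have hge : 1 - ε * Real.log p ≤ Real.exp (-(ε * Real.log p)) := by
      have := Real.add_one_le_exp (-(ε * Real.log p)); linarith
    have hip : 0 < 1 / (p:ℝ) := by positivity
    have hip2 : 1 / (p:ℝ) ≤ 1/2 := by rw [one_div_le_one_div (by linarith) (by norm_num)]; exact hp2
    have hfp1 : f p ≤ 1 / p := by rw [hfp]; nlinarith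
    have hpos2 : 0 < 1 - f p := by linarith
    have hexp := Real.add_one_le_exp (2 * ε * (Real.log p / p))
    have key : 1 - f p ≤ (1 - 1/(p:ℝ)) * (1 + 2 * ε * (Real.log p / p)) := by
      have : f p ≥ 1/p - ε * (Real.log p / p) := by
        rw [hfp]
        have := mul_le_mul_of_nonneg_left hge hip.le
        calc _ = 1 / (p:ℝ) * (1 - ε * Real.log p) := by ring
          _ ≤ _ := this
      have h0 : 0 ≤ ε * (Real.log p / p) := mul_nonneg hε0.le (div_nonneg (Real.log_natCast_nonneg p) (by linarith))
      nlinarith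
    rw [inv_mul_eq_div, inv_eq_one_div, div_le_div_iff₀ hpos hpos2, one_mul]
    calc _ ≤ _ := key
      _ ≤ _ := by rw [mul_comm]; gcongr; linarith
  have hprod : (VV N)⁻¹ ≤ (1 + 1/ε) * Real.exp (2 * (1 + Real.log 4 / Real.log 2)) := by
    calc (VV N)⁻¹ = ∏ p ∈ N.primesBelow, (1 - 1 / (p:ℝ))⁻¹ := by rw [VV, Finset.prod_inv_distrib]
      _ ≤ ∏ p ∈ N.primesBelow, ((1 - f p)⁻¹ * Real.exp (2 * ε * (Real.log p / p))) :=
          Finset.prod_le_prod (fun p hp => inv_nonneg.2 (one_sub_inv_pos (Nat.prime_of_mem_primesBelow hp)).le) hfac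
      _ = (∏ p ∈ N.primesBelow, (1 - f p)⁻¹) * Real.exp (2 * ε * ∑ p ∈ N.primesBelow, (Real.log p / p)) := by
          rw [Finset.prod_mul_distrib, Finset.mul_sum, Real.exp_sum]
      _ ≤ _ := by
        have hE' : ∏ p ∈ N.primesBelow, (1 - f p)⁻¹ = ∑' m : N.smoothNumbers, f m := hE
        rw [hE']
        have hM := sum_log_div_le N (by omega)
        have : 2 * ε * ∑ p ∈ N.primesBelow, (Real.log p / p) ≤ 2 * (1 + Real.log 4 / Real.log 2) := by
          calc _ ≤ 2 * ε * (Real.log N + Real.log 4) := by gcongr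
            _ = 2 * (1 + Real.log 4 / Real.log N) := by rw [hε]; field_simp
            _ ≤ _ := by
              have : 0 < Real.log 4 := Real.log_pos (by norm_num)
              gcongr
        gcongr
  have h1ε : 1 + 1/ε ≤ (1 + 1/Real.log 2) * Real.log N := by
    rw [hε, one_div_one_div, add_mul, one_mul, add_comm]
    gcongr
    rw [one_div, inv_mul_eq_div, le_div_iff₀ hl2]; linarith
  have hV := VV_pos N
  rw [div_le_iff₀ hlog0, inv_le_comm₀ (by positivity) (by positivity), mul_inv]
  rw [← div_eq_mul_inv, div_le_iff₀ hlog0]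
  refine hprod.trans ?_
  calc _ ≤ ((1 + 1/Real.log 2) * Real.log N) * Real.exp (2 * (1 + Real.log 4 / Real.log 2)) := by gcongr
    _ = _ := by ring





def par (odd : Bool) (n : ℕ) : Prop := if odd then Odd n else Even n

lemma par_succ (odd : Bool) (n : ℕ) : par odd (n+1) ↔ ¬ par odd n := by
  cases odd <;> simp [par, Nat.even_add_one, Nat.odd_add_one]

def okp (E : ℝ) (β : ℕ) (odd : Bool) (B : Finset ℕ) (q : ℕ) : Prop :=
  par odd B.card → (∏ p ∈ B, (p:ℝ)) * (q:ℝ)^β < E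

def upr (S : Finset ℕ) (q : ℕ) : Finset ℕ := S.filter (q ≤ ·)

def passp (E : ℝ) (β : ℕ) (odd : Bool) (S : Finset ℕ) : Prop :=
  ∀ q ∈ S, okp E β odd (upr S q) q

def bdp (E : ℝ) (β : ℕ) (odd : Bool) (B : Finset ℕ) (q : ℕ) : Prop :=
  ¬ okp E β odd B q ∧ ∀ q' ∈ B, q < q' → okp E β odd (upr B q') q'

lemma list_take_upr (l : List ℕ) (hl : l.Pairwise (· > ·)) (i : ℕ) (hi : i < l.length) :
    upr l.toFinset l[i] = (l.take (i+1)).toFinset := by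
  ext x
  simp only [upr, Finset.mem_filter, List.mem_toFinset, List.mem_take_iff_getElem]
  rw [List.pairwise_iff_getElem] at hl
  constructor
  · rintro ⟨hx, hle⟩
    obtain ⟨j, hj, rfl⟩ := List.getElem_of_mem hx
    refine ⟨j, ?_, rfl⟩
    by_contra h
    have := hl i j hi hj (by omega)
    omega
  · rintro ⟨j, hj, rfl⟩
    refine ⟨List.getElem_mem _, ?_⟩
    rcases Nat.lt_or_ge j i with h | h
    · exact (hl j i (by omega) hi h).le
    · have : j = i := by omega
      subst this; rfl

lemma squarefree_prod_primes (S : Finset ℕ) (hS : ∀ p ∈ S, p.Prime) : Squarefree (∏ p ∈ S, p) := by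
  apply Finset.squarefree_prod_of_pairwise_isCoprime
  · intro a ha b hb hab
    exact Nat.isCoprime_iff_coprime.2 ((Nat.coprime_primes (hS a ha) (hS b hb)).2 hab) |> fun h => by
      simpa [Function.onFun, Nat.coprime_iff_isRelPrime] using (Nat.coprime_primes (hS a ha) (hS b hb)).2 hab
  · intro a ha; exact (hS a ha).prime.squarefree

lemma sieveWeight_prod (lo hi lvl : ℝ) (β : ℕ) (odd : Bool) (S : Finset ℕ) (hS : ∀ p ∈ S, p.Prime) :
    sieveWeight lo hi lvl β odd (∏ p ∈ S, p) =
      if (∀ p ∈ S, lo ≤ (p:ℝ) ∧ (p:ℝ) < hi) ∧ passp lvl β odd S then (-1)^S.card else 0 := by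
  have hsq := squarefree_prod_primes S hS
  set d := ∏ p ∈ S, p with hd
  have hpf : d.primeFactors = S := Nat.primeFactors_prod hS
  have hlen : d.primeFactorsList.length = S.card := by
    rw [← hpf, Nat.primeFactors, List.toFinset_card_of_nodup (Nat.squarefree_iff_nodup_primeFactorsList hsq.ne_zero |>.1 hsq)]
  set l := d.primeFactorsList.reverse with hl
  have hllen : l.length = S.card := by rw [hl, List.length_reverse, hlen]
  have hnd : l.Nodup := List.nodup_reverse.2 (Nat.squarefree_iff_nodup_primeFactorsList hsq.ne_zero |>.1 hsq)
  have hpw : l.Pairwise (· > ·) := by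
    rw [hl, List.pairwise_reverse]
    have h1 : d.primeFactorsList.Pairwise (· ≤ ·) := (Nat.primeFactorsList_sorted d).pairwise
    have h2 : d.primeFactorsList.Pairwise (· ≠ ·) := Nat.squarefree_iff_nodup_primeFactorsList hsq.ne_zero |>.1 hsq
    exact (h1.and h2).imp fun h => lt_of_le_of_ne h.1 h.2
  have hltf : l.toFinset = S := by rw [hl, List.toFinset_reverse, ← hpf]; rfl
  have key : ∀ i (hi : i < l.length), upr S l[i] = (l.take (i+1)).toFinset ∧ (upr S l[i]).card = i+1 ∧
      ∏ p ∈ upr S l[i], (p:ℝ) = ((l.take (i+1)).prod : ℕ) := by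
    intro i hi
    have h := list_take_upr l hpw i hi
    rw [hltf] at h
    have hnd' : (l.take (i+1)).Nodup := hnd.sublist (List.take_sublist _ _)
    refine ⟨h, ?_, ?_⟩
    · rw [h, List.toFinset_card_of_nodup hnd', List.length_take]; omega
    · rw [h, List.prod_toFinset _ hnd']
      simp
  unfold sieveWeight
  have hmu : ((ArithmeticFunction.moebius d : ℤ) : ℝ) = (-1)^S.card := by
    rw [ArithmeticFunction.moebius_apply_of_squarefree hsq, ArithmeticFunction.cardFactors_apply, hlen]
    push_cast; rfl
  rw [hmu, hpf, hlen]
  congr 1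
  rw [eq_iff_iff]
  simp only [hsq, true_and]
  refine and_congr_right fun _ => ?_
  constructor
  · intro h q hq hp
    rw [← hltf, List.mem_toFinset] at hq
    obtain ⟨i, hi, rfl⟩ := List.getElem_of_mem hq
    obtain ⟨h1, h2, h3⟩ := key i hi
    rw [h2] at hp
    have := h (i+1) (by omega) (by omega) hp
    rw [h3]
    rw [Nat.add_sub_cancel, List.getD_eq_getElem _ _ hi] at this
    exact this
  · intro h m hm1 hm2 hp
    obtain ⟨i, rfl⟩ : ∃ i, m = i + 1 := ⟨m-1, by omega⟩
    have hi : i < l.length := by omega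
    obtain ⟨h1, h2, h3⟩ := key i hi
    have := h l[i] (by rw [← hltf, List.mem_toFinset]; exact List.getElem_mem _) (by rw [h2]; exact hp)
    rw [h3] at this
    rw [Nat.add_sub_cancel, List.getD_eq_getElem _ _ hi]
    exact this

lemma upr_upr (S : Finset ℕ) {q q' : ℕ} (h : q ≤ q') : upr (upr S q) q' = upr S q' := by
  ext x; simp only [upr, Finset.mem_filter]; constructor
  · rintro ⟨⟨a, b⟩, c⟩; exact ⟨a, c⟩
  · rintro ⟨a, c⟩; exact ⟨⟨a, h.trans c⟩, c⟩

lemma pass_decomp (E : ℝ) (β : ℕ) (odd : Bool) (S : Finset ℕ) :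
    (if passp E β odd S then (1:ℝ) else 0) = 1 - ∑ q ∈ S, if bdp E β odd (upr S q) q then (1:ℝ) else 0 := by
  by_cases hp : passp E β odd S
  · rw [if_pos hp, Finset.sum_eq_zero, sub_zero]
    intro q hq
    rw [if_neg]
    exact fun h => h.1 (hp q hq)
  · rw [if_neg hp]
    have hne : (S.filter fun q => ¬ okp E β odd (upr S q) q).Nonempty := by
      unfold passp at hp; push Not at hp
      obtain ⟨q, hq, h⟩ := hp
      exact ⟨q, Finset.mem_filter.2 ⟨hq, h⟩⟩
    set q0 := (S.filter fun q => ¬ okp E β odd (upr S q) q).max' hne with hq0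
    have hmem := Finset.max'_mem _ hne
    rw [← hq0, Finset.mem_filter] at hmem
    have hmax : ∀ q ∈ S, q0 < q → okp E β odd (upr S q) q := by
      intro q hq hlt
      by_contra h
      have := Finset.le_max' (S.filter fun q => ¬ okp E β odd (upr S q) q) q (Finset.mem_filter.2 ⟨hq, h⟩)
      omega
    rw [Finset.sum_eq_single q0]
    · rw [if_pos, sub_self]
      refine ⟨hmem.2, fun q' hq' hlt => ?_⟩
      rw [upr_upr _ hlt.le]
      exact hmax q' (Finset.mem_filter.1 hq').1 hlt
    · intro q hq hne
      rw [if_neg]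
      rintro ⟨h1, h2⟩
      rcases lt_or_gt_of_ne hne with h | h
      · have := h2 q0 (Finset.mem_filter.2 ⟨hmem.1, h.le⟩) h
        rw [upr_upr _ h.le] at this
        exact hmem.2 this
      · exact h1 (hmax q hq h)
    · intro h; exact absurd hmem.1 h

lemma upr_min {a : ℕ} {S : Finset ℕ} (h : ∀ x ∈ S, a < x) : upr (insert a S) a = insert a S := by
  rw [upr, Finset.filter_true_of_mem]
  intro x hx
  rcases Finset.mem_insert.1 hx with rfl | hx
  · exact le_rfl
  · exact (h x hx).le

lemma upr_insert {a : ℕ} {S : Finset ℕ} (h : ∀ x ∈ S, a < x) {q : ℕ} (hq : q ∈ S) : upr (insert a S) q = upr S q := by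
  rw [upr, Finset.filter_insert, if_neg]
  · rfl
  · have := h q hq; omega

lemma pass_insert {E : ℝ} {β : ℕ} {odd : Bool} {a : ℕ} {S : Finset ℕ} (h : ∀ x ∈ S, a < x)
    (hp : passp E β odd (insert a S)) : passp E β odd S ∧ okp E β odd (insert a S) a := by
  constructor
  · intro q hq
    have := hp q (Finset.mem_insert_of_mem hq)
    rwa [upr_insert h hq] at this
  · have := hp a (Finset.mem_insert_self _ _)
    rwa [upr_min h] at this

lemma pass_min {E : ℝ} {β : ℕ} {odd : Bool} {S : Finset ℕ} (hS : S.Nonempty)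
    (hp : passp E β odd S) : okp E β odd S (S.min' hS) := by
  have := hp _ (S.min'_mem hS)
  rwa [upr, Finset.filter_true_of_mem (fun x hx => S.min'_le x hx)] at this

lemma pass_support (hi lvl : ℝ) (β : ℕ) (hβ : 1 ≤ β) (odd : Bool) (S : Finset ℕ) (hS : ∀ p ∈ S, p.Prime)
    (hhi : ∀ p ∈ S, (p:ℝ) < hi) (h1 : 1 ≤ lvl) (h2 : hi ≤ lvl) (hp : passp lvl β odd S) :
    ∏ p ∈ S, (p:ℝ) ≤ lvl := by
  induction S using Finset.induction_on_min with
  | empty => simpa using h1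
  | insert a S ha _ =>
    obtain ⟨hp1, hp2⟩ := pass_insert ha hp
    have haS : a ∉ S := fun h => lt_irrefl _ (ha a h)
    have hprim := hS a (Finset.mem_insert_self _ _)
    have ha1 : (1:ℝ) ≤ a := by exact_mod_cast hprim.one_le
    have hpos : 0 ≤ ∏ p ∈ insert a S, (p:ℝ) := Finset.prod_nonneg fun _ _ => Nat.cast_nonneg _
    have hpos' : 0 ≤ ∏ p ∈ S, (p:ℝ) := Finset.prod_nonneg fun _ _ => Nat.cast_nonneg _
    by_cases hpar : par odd (insert a S).card
    · have := hp2 hpar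
      have h3 : (1:ℝ) ≤ (a:ℝ)^β := one_le_pow₀ ha1
      nlinarith
    · rcases S.eq_empty_or_nonempty with rfl | hne
      · have := hhi a (Finset.mem_insert_self _ _)
        simp; linarith
      · rw [Finset.card_insert_of_notMem haS, par_succ, not_not] at hpar
        have := pass_min hne hp1 hpar
        have hb := ha _ (S.min'_mem hne)
        have hb' : (a:ℝ) ≤ S.min' hne := by exact_mod_cast hb.le
        have h4 : (S.min' hne : ℝ) ≤ (S.min' hne : ℝ)^β := le_self_pow₀ (by linarith) (by omega)
        rw [Finset.prod_insert haS, mul_comm]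
        refine le_trans ?_ this.le
        gcongr
        linarith

lemma pass_log (w E : ℝ) (hw : 1 < w) (hE : 0 < E) (hwE : 30 * Real.log w ≤ Real.log E) (odd : Bool) (S : Finset ℕ)
    (hS : ∀ p ∈ S, p.Prime) (hSw : ∀ p ∈ S, (p:ℝ) < w) (hp : passp E 30 odd S) :
    (28/29:ℝ)^S.card * Real.log E ≤ Real.log E - ∑ p ∈ S, Real.log p ∧
    ∀ q : ℕ, q.Prime → (q:ℝ) < w → (∀ p ∈ S, q < p) →
      (29 * Real.log q ≤ Real.log E - ∑ p ∈ S, Real.log p ∧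
        ((S = ∅ ∨ par odd S.card) → 30 * Real.log q ≤ Real.log E - ∑ p ∈ S, Real.log p)) := by
  have hlq : ∀ q : ℕ, q.Prime → (q:ℝ) < w → 0 < Real.log q ∧ Real.log q < Real.log w := by
    intro q hq hqw
    have : (2:ℝ) ≤ q := by exact_mod_cast hq.two_le
    exact ⟨Real.log_pos (by linarith), Real.log_lt_log (by linarith) hqw⟩
  induction S using Finset.induction_on_min with
  | empty =>
    simp only [Finset.card_empty, pow_zero, one_mul, Finset.sum_empty, sub_zero, le_refl, true_and]
    intro q hq hqw _
    obtain ⟨h1, h2⟩ := hlq q hq hqw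
    exact ⟨by linarith, fun _ => by linarith⟩
  | insert a S ha ih =>
    obtain ⟨hp1, hp2⟩ := pass_insert ha hp
    have haS : a ∉ S := fun h => lt_irrefl _ (ha a h)
    have hprim := hS a (Finset.mem_insert_self _ _)
    have haw := hSw a (Finset.mem_insert_self _ _)
    obtain ⟨i1, i2⟩ := ih (fun p h => hS p (Finset.mem_insert_of_mem h)) (fun p h => hSw p (Finset.mem_insert_of_mem h)) hp1
    obtain ⟨j1, j2⟩ := i2 a hprim haw ha
    rw [Finset.sum_insert haS, Finset.card_insert_of_notMem haS]
    constructor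
    · rw [pow_succ]; nlinarith
    intro q hq hqw hqa
    have hqa' := hqa a (Finset.mem_insert_self _ _)
    have hlt : Real.log q ≤ Real.log a := Real.log_le_log (by exact_mod_cast hq.pos) (by exact_mod_cast hqa'.le)
    have hq0 := (hlq q hq hqw).1
    have hokl : par odd (S.card + 1) → 30 * Real.log a ≤ Real.log E - (Real.log a + ∑ p ∈ S, Real.log p) := by
      intro hpar
      have := hp2 (by rwa [Finset.card_insert_of_notMem haS])
      have hne : ∀ p ∈ insert a S, (p:ℝ) ≠ 0 := fun p h => by exact_mod_cast (hS p h).ne_zero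
      have hpos : 0 < ∏ p ∈ insert a S, (p:ℝ) := Finset.prod_pos fun p h => by exact_mod_cast (hS p h).pos
      have ha0 : (0:ℝ) < a := by exact_mod_cast hprim.pos
      have h3 := Real.log_lt_log (by positivity) this
      rw [Real.log_mul hpos.ne' (by positivity), Real.log_prod hne, Real.log_pow, Finset.sum_insert haS] at h3
      push_cast at h3
      linarith
    refine ⟨?_, ?_⟩
    · by_cases hpar : par odd (S.card + 1)
      · have := hokl hpar; linarith
      · rw [par_succ, not_not] at hpar
        have := j2 (Or.inr hpar)
        linarith
    · rintro (h | h)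
      · simp at h
      · have := hokl h; linarith

lemma bd_bound (w E : ℝ) (hw : 1 < w) (hE : 0 < E) (hwE : 30 * Real.log w ≤ Real.log E) (odd : Bool) (B : Finset ℕ)
    (q : ℕ) (hqB : q ∈ B) (hmin : ∀ p ∈ B, q ≤ p)
    (hS : ∀ p ∈ B, p.Prime) (hSw : ∀ p ∈ B, (p:ℝ) < w) (hb : bdp E 30 odd B q) :
    (Real.log w / Real.log q)^19 ≤ 2^B.card := by
  obtain ⟨h1, h2⟩ := hb
  set S := B.erase q with hSdef
  have hB : B = insert q S := (Finset.insert_erase hqB).symm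
  have hqS : q ∉ S := Finset.notMem_erase q B
  have hlt : ∀ x ∈ S, q < x := by
    intro x hx
    have := hmin x (Finset.mem_of_mem_erase hx)
    have := Finset.ne_of_mem_erase hx
    omega
  have hpS : passp E 30 odd S := by
    intro x hx
    have := h2 x (Finset.mem_of_mem_erase hx) (hlt x hx)
    rwa [hB, upr_insert hlt hx] at this
  obtain ⟨i1, i2⟩ := pass_log w E hw hE hwE odd S (fun p h => hS p (Finset.mem_of_mem_erase h)) (fun p h => hSw p (Finset.mem_of_mem_erase h)) hpS
  obtain ⟨j1, -⟩ := i2 q (hS q hqB) (hSw q hqB) hlt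
  unfold okp at h1
  push Not at h1
  obtain ⟨-, h1⟩ := h1
  have hne : ∀ p ∈ B, (p:ℝ) ≠ 0 := fun p h => by exact_mod_cast (hS p h).ne_zero
  have hpos : 0 < ∏ p ∈ B, (p:ℝ) := Finset.prod_pos fun p h => by exact_mod_cast (hS p h).pos
  have hq0 : (2:ℝ) ≤ q := by exact_mod_cast (hS q hqB).two_le
  have hlq : 0 < Real.log q := Real.log_pos (by linarith)
  have h3 := Real.log_le_log hE h1
  rw [Real.log_mul hpos.ne' (by positivity), Real.log_prod hne, Real.log_pow] at h3
  rw [hB, Finset.sum_insert hqS] at h3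
  push_cast at h3
  have hlw : 0 < Real.log w := Real.log_pos hw
  have hcard : B.card = S.card + 1 := by rw [hB, Finset.card_insert_of_notMem hqS]
  have h4 : (28/29:ℝ)^B.card * Real.log E ≤ 30 * Real.log q := by
    rw [hcard, pow_succ]; nlinarith
  have h5 : (28/29:ℝ)^B.card * Real.log w ≤ Real.log q := by
    have : (0:ℝ) < (28/29:ℝ)^B.card := by positivity
    nlinarith
  have h6 : Real.log w / Real.log q ≤ (29/28:ℝ)^B.card := by
    rw [div_le_iff₀ hlq]
    have : (29/28:ℝ)^B.card * (28/29:ℝ)^B.card = 1 := by rw [← mul_pow]; norm_num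
    calc Real.log w = (29/28:ℝ)^B.card * ((28/29:ℝ)^B.card * Real.log w) := by rw [← mul_assoc, this, one_mul]
      _ ≤ _ := by gcongr
  calc (Real.log w / Real.log q)^19 ≤ ((29/28:ℝ)^B.card)^19 := by gcongr
    _ = ((29/28:ℝ)^19)^B.card := by rw [← pow_mul, ← pow_mul, mul_comm]
    _ ≤ 2^B.card := by gcongr; norm_num



lemma sum_powerset_split (U W : Finset ℕ) (h : Disjoint U W) (F : Finset ℕ → ℝ) :
    ∑ S ∈ (U ∪ W).powerset, F S = ∑ A ∈ U.powerset, ∑ B ∈ W.powerset, F (A ∪ B) := by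
  rw [← Finset.sum_product']
  refine Finset.sum_nbij' (fun S => (S ∩ U, S ∩ W)) (fun x => x.1 ∪ x.2) ?_ ?_ ?_ ?_ ?_
  · intro S _; simp
  · rintro ⟨A, B⟩ hx
    simp only [Finset.mem_product, Finset.mem_powerset] at hx ⊢
    exact Finset.union_subset_union hx.1 hx.2
  · intro S hS
    simp only [Finset.mem_powerset] at hS
    simp only [← Finset.inter_union_distrib_left]
    exact Finset.inter_eq_left.2 hS
  · rintro ⟨A, B⟩ hx
    simp only [Finset.mem_product, Finset.mem_powerset] at hx
    rw [Finset.disjoint_left] at h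
    ext x <;> simp only [Finset.mem_inter, Finset.mem_union]
    · constructor
      · rintro ⟨h1 | h1, h2⟩
        · exact h1
        · exact absurd (hx.2 h1) (h h2)
      · intro h1; exact ⟨Or.inl h1, hx.1 h1⟩
    · constructor
      · rintro ⟨h1 | h1, h2⟩
        · exact absurd h2 (h (hx.1 h1))
        · exact h1
      · intro h1; exact ⟨Or.inr h1, hx.2 h1⟩
  · intro S hS
    simp only [Finset.mem_powerset] at hS
    simp only [← Finset.inter_union_distrib_left]
    rw [Finset.inter_eq_left.2 hS]

lemma sum_powerset_prod (P : Finset ℕ) (f g : ℕ → ℝ) :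
    ∑ S ∈ P.powerset, ∏ p ∈ P, (if p ∈ S then f p else g p) = ∏ p ∈ P, (f p + g p) := by
  rw [Finset.prod_add]
  refine Finset.sum_congr rfl fun S hS => ?_
  rw [Finset.mem_powerset] at hS
  rw [← Finset.prod_sdiff hS, mul_comm]
  congr 1
  · exact Finset.prod_congr rfl fun p hp => if_pos hp
  · exact Finset.prod_congr rfl fun p hp => if_neg (Finset.mem_sdiff.1 hp).2

noncomputable def KK (U T S : Finset ℕ) : ℝ :=
  ∏ p ∈ U, (if p ∈ S then 1 / (p:ℝ) else if p ∈ T then 0 else 1)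

lemma KK_nonneg (U T S : Finset ℕ) : 0 ≤ KK U T S :=
  Finset.prod_nonneg fun p _ => by split_ifs <;> positivity

lemma KK_union (U W T A B : Finset ℕ) (h : Disjoint U W) (hA : A ⊆ U) (hB : B ⊆ W) :
    KK (U ∪ W) T (A ∪ B) = KK U T A * KK W T B := by
  unfold KK
  rw [Finset.prod_union h]
  rw [Finset.disjoint_left] at h
  congr 1
  · refine Finset.prod_congr rfl fun p hp => ?_
    have : p ∈ A ∪ B ↔ p ∈ A := by
      rw [Finset.mem_union]; exact ⟨fun h' => h'.elim id fun hb => absurd (hB hb) (h hp), Or.inl⟩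
    simp only [this]
  · refine Finset.prod_congr rfl fun p hp => ?_
    have : p ∈ A ∪ B ↔ p ∈ B := by
      rw [Finset.mem_union]; exact ⟨fun h' => h'.elim (fun ha => absurd hp (h (hA ha))) id, Or.inr⟩
    simp only [this]

lemma pow_card_prod (U A : Finset ℕ) (hA : A ⊆ U) (x : ℝ) :
    x ^ A.card = ∏ p ∈ U, (if p ∈ A then x else 1) := by
  rw [Finset.prod_ite_mem, Finset.inter_eq_right.2 hA, Finset.prod_const]

lemma sum_pow_KK (U T : Finset ℕ) (x : ℝ) :
    ∑ A ∈ U.powerset, x ^ A.card * KK U T A = ∏ p ∈ U, (x * (1 / (p:ℝ)) + if p ∈ T then 0 else 1) := by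
  rw [← sum_powerset_prod]
  refine Finset.sum_congr rfl fun A hA => ?_
  rw [Finset.mem_powerset] at hA
  rw [pow_card_prod U A hA, KK, ← Finset.prod_mul_distrib]
  refine Finset.prod_congr rfl fun p _ => ?_
  split_ifs <;> simp

/-- abs of the unsieved factor -/
lemma abs_mu_KK (U T : Finset ℕ) (hU : ∀ p ∈ U, p.Prime) :
    |∑ A ∈ U.powerset, (-1:ℝ) ^ A.card * KK U T A| = ∏ p ∈ U, (if p ∈ T then 1 / (p:ℝ) else 1 - 1 / (p:ℝ)) := by
  rw [sum_pow_KK, Finset.abs_prod]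
  refine Finset.prod_congr rfl fun p hp => ?_
  have := one_sub_inv_pos (hU p hp)
  split_ifs
  · rw [add_zero, neg_one_mul, abs_neg, abs_of_nonneg (by positivity)]
  · rw [neg_one_mul, abs_of_nonneg (by linarith)]; ring

noncomputable def hq (q p : ℕ) (T : Finset ℕ) : ℝ :=
  if p < q then (if p ∈ T then 1 / (p:ℝ) else 1 - 1 / (p:ℝ))
  else if p = q then 2 / (q:ℝ) else (if p ∈ T then 2 / (p:ℝ) else 1 + 2 / (p:ℝ))

noncomputable def gq (E : ℝ) (odd : Bool) (P T : Finset ℕ) (q : ℕ) : ℝ :=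
  ∑ S ∈ P.powerset, (if q ∈ S ∧ bdp E 30 odd (upr S q) q then (-1:ℝ)^S.card else 0) * KK P T S

lemma gq_bound (N : ℕ) (hN : 2 ≤ N) (E : ℝ) (hE : 0 < E) (hwE : 30 * Real.log N ≤ Real.log E) (odd : Bool)
    (T : Finset ℕ) (q : ℕ) (hqP : q ∈ Nat.primesBelow N) :
    |gq E odd (Nat.primesBelow N) T q| ≤ (Real.log q / Real.log N)^19 * ∏ p ∈ Nat.primesBelow N, hq q p T := by
  set P := Nat.primesBelow N with hP
  have hPp : ∀ p ∈ P, p.Prime := fun p hp => Nat.prime_of_mem_primesBelow hp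
  have hPN : ∀ p ∈ P, p < N := fun p hp => Nat.lt_of_mem_primesBelow hp
  set L := P.filter (· < q) with hL
  set H := P.filter (q ≤ ·) with hH
  have hdis : Disjoint L H := by
    rw [Finset.disjoint_left]; intro p h1 h2
    have := (Finset.mem_filter.1 h1).2; have := (Finset.mem_filter.1 h2).2; omega
  have hun : P = L ∪ H := by
    ext p; simp only [hL, hH, Finset.mem_union, Finset.mem_filter]
    constructor
    · intro h; rcases Nat.lt_or_ge p q with h' | h'
      · exact Or.inl ⟨h, h'⟩
      · exact Or.inr ⟨h, h'⟩
    · rintro (h | h) <;> exact h.1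
  have hLp : ∀ p ∈ L, p.Prime := fun p hp => hPp p (Finset.mem_filter.1 hp).1
  have hq2 : (2:ℝ) ≤ q := by exact_mod_cast (hPp q hqP).two_le
  have hlq : 0 < Real.log q := Real.log_pos (by linarith)
  have hlN : 0 < Real.log N := Real.log_pos (by exact_mod_cast hN)
  have hfac : gq E odd P T q = (∑ A ∈ L.powerset, (-1:ℝ) ^ A.card * KK L T A) *
      ∑ B ∈ H.powerset, (if q ∈ B ∧ bdp E 30 odd B q then (-1:ℝ)^B.card else 0) * KK H T B := by
    unfold gq
    rw [hun, sum_powerset_split L H hdis, Finset.sum_mul_sum]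
    refine Finset.sum_congr rfl fun A hA => Finset.sum_congr rfl fun B hB => ?_
    rw [Finset.mem_powerset] at hA hB
    rw [KK_union L H T A B hdis hA hB]
    have h1 : q ∈ A ∪ B ↔ q ∈ B := by
      rw [Finset.mem_union]
      refine ⟨fun h => h.elim (fun ha => ?_) id, Or.inr⟩
      have := (Finset.mem_filter.1 (hA ha)).2; omega
    have h2 : upr (A ∪ B) q = B := by
      ext x; simp only [upr, Finset.mem_filter, Finset.mem_union]
      constructor
      · rintro ⟨h | h, h'⟩
        · have := (Finset.mem_filter.1 (hA h)).2; omega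
        · exact h
      · intro h; exact ⟨Or.inr h, (Finset.mem_filter.1 (hB h)).2⟩
    have h3 : (A ∪ B).card = A.card + B.card :=
      Finset.card_union_of_disjoint (Finset.disjoint_of_subset_left hA (Finset.disjoint_of_subset_right hB hdis))
    simp only [h1, h2, h3]
    split_ifs
    · rw [pow_add]; ring
    · ring
  rw [hfac, abs_mul, abs_mu_KK L T hLp]
  have hsec : |∑ B ∈ H.powerset, (if q ∈ B ∧ bdp E 30 odd B q then (-1:ℝ)^B.card else 0) * KK H T B| ≤
      (Real.log q / Real.log N)^19 * ∏ p ∈ H, (2 / (p:ℝ) + if p = q then 0 else if p ∈ T then 0 else 1) := by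
    refine (Finset.abs_sum_le_sum_abs _ _).trans ?_
    rw [← sum_powerset_prod, Finset.mul_sum]
    refine Finset.sum_le_sum fun B hB => ?_
    rw [Finset.mem_powerset] at hB
    by_cases hc : q ∈ B ∧ bdp E 30 odd B q
    · rw [if_pos hc, abs_mul, abs_pow, abs_neg, abs_one, one_pow, one_mul, abs_of_nonneg (KK_nonneg _ _ _)]
      have hb := bd_bound N E (by exact_mod_cast hN) hE hwE odd B q hc.1
        (fun p hp => (Finset.mem_filter.1 (hB hp)).2)
        (fun p hp => hPp p (Finset.mem_filter.1 (hB hp)).1)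
        (fun p hp => by exact_mod_cast hPN p (Finset.mem_filter.1 (hB hp)).1) hc.2
      have hprod : ∏ p ∈ H, (if p ∈ B then 2 / (p:ℝ) else if p = q then 0 else if p ∈ T then 0 else 1) = 2^B.card * KK H T B := by
        rw [pow_card_prod H B hB, KK, ← Finset.prod_mul_distrib]
        refine Finset.prod_congr rfl fun p _ => ?_
        by_cases hpB : p ∈ B
        · simp only [hpB, if_true]; ring
        · have : p ≠ q := fun h => hpB (h ▸ hc.1)
          simp only [hpB, this, if_false, one_mul]
      rw [hprod, ← mul_assoc]
      have h1 : 1 ≤ (Real.log q / Real.log N)^19 * 2^B.card := by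
        have h2 : (Real.log q / Real.log N)^19 * (Real.log N / Real.log q)^19 = 1 := by
          rw [← mul_pow, div_mul_div_comm, mul_comm, div_self (by positivity), one_pow]
        rw [← h2]; gcongr
      exact le_mul_of_one_le_left (KK_nonneg _ _ _) h1
    · rw [if_neg hc, zero_mul, abs_zero]
      refine mul_nonneg (by positivity) (Finset.prod_nonneg fun p _ => ?_)
      split_ifs <;> positivity
  have hsplit : ∏ p ∈ P, hq q p T = (∏ p ∈ L, (if p ∈ T then 1 / (p:ℝ) else 1 - 1 / (p:ℝ))) *
      ∏ p ∈ H, (2 / (p:ℝ) + if p = q then 0 else if p ∈ T then 0 else 1) := by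
    rw [hun, Finset.prod_union hdis]
    congr 1
    · refine Finset.prod_congr rfl fun p hp => ?_
      rw [hq, if_pos (Finset.mem_filter.1 hp).2]
    · refine Finset.prod_congr rfl fun p hp => ?_
      rw [hq, if_neg (by have := (Finset.mem_filter.1 hp).2; omega)]
      by_cases h : p = q
      · simp [h]
      · simp only [h, if_false]; split_ifs <;> ring
  rw [hsplit]
  have hLn : 0 ≤ ∏ p ∈ L, (if p ∈ T then 1 / (p:ℝ) else 1 - 1 / (p:ℝ)) :=
    Finset.prod_nonneg fun p hp => by
      have := one_sub_inv_pos (hLp p hp)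
      split_ifs
      · positivity
      · linarith
  calc _ ≤ _ := mul_le_mul_of_nonneg_left hsec hLn
    _ = _ := by ring

lemma sum_half_upr (T : Finset ℕ) : ∑ q ∈ T, (1/2:ℝ)^(upr T q).card = 1 - (1/2:ℝ)^T.card := by
  induction T using Finset.induction_on_min with
  | empty => simp
  | insert a S ha ih =>
    have haS : a ∉ S := fun h => lt_irrefl _ (ha a h)
    rw [Finset.sum_insert haS, upr_min ha, Finset.card_insert_of_notMem haS,
      Finset.sum_congr rfl (fun q hq => by rw [upr_insert ha hq]), ih, pow_succ]
    ring

noncomputable def cq (N q : ℕ) (T : Finset ℕ) : ℝ :=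
  if q ∈ T then (1/2:ℝ)^(upr T q).card else Real.log q / Real.log N / q

lemma log_four_le {N : ℕ} (hN : 2 ≤ N) : Real.log 4 ≤ 2 * Real.log N := by
  have : Real.log 4 = 2 * Real.log 2 := by
    rw [show (4:ℝ) = 2^2 by norm_num, Real.log_pow]; norm_num
  have h := Real.log_le_log (x := 2) (y := N) (by norm_num) (by exact_mod_cast hN)
  linarith

lemma cq_sum (N : ℕ) (hN : 2 ≤ N) (T : Finset ℕ) (hT : T ⊆ Nat.primesBelow N) :
    ∑ q ∈ Nat.primesBelow N, cq N q T ≤ 4 := by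
  have hlN : 0 < Real.log N := Real.log_pos (by exact_mod_cast hN)
  have h1 : ∀ q ∈ Nat.primesBelow N, cq N q T ≤ (if q ∈ T then (1/2:ℝ)^(upr T q).card else 0) + (Real.log q / q) / Real.log N := by
    intro q _
    have : 0 ≤ (Real.log q / q) / Real.log N := div_nonneg (div_nonneg (Real.log_natCast_nonneg q) (by positivity)) hlN.le
    unfold cq
    split_ifs
    · linarith
    · rw [zero_add]; apply le_of_eq; ring
  refine (Finset.sum_le_sum h1).trans ?_
  rw [Finset.sum_add_distrib, ← Finset.sum_filter, Finset.filter_mem_eq_inter, Finset.inter_eq_right.2 hT, sum_half_upr, ← Finset.sum_div]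
  have h2 := sum_log_div_le N (by omega)
  have h3 := log_four_le hN
  have h4 : (∑ q ∈ Nat.primesBelow N, Real.log q / q) / Real.log N ≤ 3 := by
    rw [div_le_iff₀ hlN]; linarith
  have : (0:ℝ) ≤ (1/2:ℝ)^T.card := by positivity
  linarith



lemma VV_ratio (M N : ℕ) (h : M ≤ N) :
    ∏ p ∈ (Nat.primesBelow N).filter (M ≤ ·), (1 - 1 / (p:ℝ))⁻¹ = VV M / VV N := by
  have h1 : VV N = VV M * ∏ p ∈ (Nat.primesBelow N).filter (M ≤ ·), (1 - 1 / (p:ℝ)) := by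
    unfold VV
    rw [← Finset.prod_filter_mul_prod_filter_not (Nat.primesBelow N) (· < M)]
    congr 1
    · refine Finset.prod_congr ?_ fun _ _ => rfl
      ext p; simp only [Finset.mem_filter, Nat.mem_primesBelow]
      constructor
      · rintro ⟨⟨a, b⟩, c⟩; exact ⟨c, b⟩
      · rintro ⟨a, b⟩; exact ⟨⟨by omega, b⟩, a⟩
    · refine Finset.prod_congr ?_ fun _ _ => rfl
      ext p; simp only [Finset.mem_filter, not_lt]
  have hN := VV_pos N
  have hM := VV_pos M
  rw [Finset.prod_inv_distrib, eq_div_iff hN.ne', h1]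
  have : ∏ p ∈ (Nat.primesBelow N).filter (M ≤ ·), (1 - 1 / (p:ℝ)) ≠ 0 := by
    intro h0; rw [h0, mul_zero] at h1; exact hN.ne' h1
  field_simp

lemma prod_ratio_bound (M N k : ℕ) (h : M ≤ N) (f : ℕ → ℝ)
    (hf : ∀ p, p.Prime → 0 ≤ f p ∧ f p ≤ 1 + k / p) :
    ∏ p ∈ (Nat.primesBelow N).filter (M ≤ ·), f p ≤ (VV M / VV N)^k := by
  rw [← VV_ratio M N h, ← Finset.prod_pow]
  refine Finset.prod_le_prod (fun p hp => ?_) fun p hp => ?_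
  · exact (hf p (Nat.prime_of_mem_primesBelow (Finset.mem_filter.1 hp).1)).1
  · have hpp := Nat.prime_of_mem_primesBelow (Finset.mem_filter.1 hp).1
    refine (hf p hpp).2.trans ?_
    have h0 := one_sub_inv_pos hpp
    have hp0 : (0:ℝ) < p := by exact_mod_cast hpp.pos
    have h1 : 1 + 1/(p:ℝ) ≤ (1 - 1/(p:ℝ))⁻¹ := by
      rw [le_inv_comm₀ (by positivity) h0, inv_eq_one_div, le_div_iff₀ (by positivity)]
      have : 0 ≤ (1/(p:ℝ))^2 := by positivity
      nlinarith
    have h2 := one_add_mul_le_pow (a := 1/(p:ℝ)) (by have : 0 < 1/(p:ℝ) := by positivity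
                                                     linarith) k
    calc 1 + (k:ℝ)/p = 1 + k * (1/p) := by ring
      _ ≤ (1 + 1/(p:ℝ))^k := h2
      _ ≤ _ := by gcongr

lemma prod_main_bound : ∃ C : ℝ, 0 < C ∧ ∀ N : ℕ,
    ∏ p ∈ Nat.primesBelow N, (1 / (p:ℝ) + (1 - 1 / (p:ℝ))^2) ≤ C * VV N := by
  have hs : Summable (fun n : ℕ => 2 / (n:ℝ)^2) := by
    have := (Real.summable_one_div_nat_pow (p := 2)).2 (by norm_num)
    simpa [div_eq_mul_inv] using this.mul_left 2
  refine ⟨Real.exp (∑' n : ℕ, 2 / (n:ℝ)^2), Real.exp_pos _, fun N => ?_⟩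
  calc _ ≤ ∏ p ∈ Nat.primesBelow N, (Real.exp (2 / (p:ℝ)^2) * (1 - 1 / (p:ℝ))) := by
        refine Finset.prod_le_prod (fun p hp => by positivity) fun p hp => ?_
        have hpp := Nat.prime_of_mem_primesBelow hp
        have h0 := one_sub_inv_pos hpp
        have hp2 : (2:ℝ) ≤ p := by exact_mod_cast hpp.two_le
        have h1 := Real.add_one_le_exp (2 / (p:ℝ)^2)
        have hi : 1/(p:ℝ) ≤ 1/2 := by rw [one_div_le_one_div (by linarith) (by norm_num)]; exact hp2
        have hi0 : 0 < 1/(p:ℝ) := by positivity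
        have h3 : 2 / (p:ℝ)^2 = 2 * (1/(p:ℝ))^2 := by field_simp
        rw [h3] at h1 ⊢
        set x := 1/(p:ℝ)
        calc x + (1-x)^2 ≤ (2*x^2+1)*(1-x) := by nlinarith [sq_nonneg x]
          _ ≤ _ := by gcongr
    _ = Real.exp (∑ p ∈ Nat.primesBelow N, 2 / (p:ℝ)^2) * VV N := by
        rw [Finset.prod_mul_distrib, Real.exp_sum, VV]
    _ ≤ _ := by
        have := VV_pos N
        gcongr
        exact hs.sum_le_tsum _ (fun _ _ => by positivity)

noncomputable def eq' (N q p : ℕ) (T : Finset ℕ) : ℝ :=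
  if p < q then 1 else if p = q then (if p ∈ T then 2 else q / (Real.log q / Real.log N))
    else if p ∈ T then 2 else 1

lemma cq_inv_le (N q : ℕ) (hqP : q ∈ Nat.primesBelow N) (T : Finset ℕ) (hT : T ⊆ Nat.primesBelow N) :
    (cq N q T)⁻¹ ≤ ∏ p ∈ Nat.primesBelow N, eq' N q p T := by
  unfold cq
  by_cases hqT : q ∈ T
  · rw [if_pos hqT, ← inv_pow, pow_card_prod (Nat.primesBelow N) (upr T q) ((Finset.filter_subset _ _).trans hT)]
    apply le_of_eq
    refine Finset.prod_congr rfl fun p _ => ?_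
    simp only [upr, Finset.mem_filter, eq']
    by_cases h1 : p < q
    · rw [if_neg (by omega), if_pos h1]
    · rw [if_neg h1]
      by_cases h2 : p = q
      · subst h2; simp [hqT]
      · rw [if_neg h2]
        by_cases h3 : p ∈ T
        · rw [if_pos ⟨h3, by omega⟩, if_pos h3]; norm_num
        · rw [if_neg (fun h => h3 h.1), if_neg h3]
  · rw [if_neg hqT, ← Finset.mul_prod_erase _ _ hqP]
    have h1 : eq' N q q T = (Real.log q / Real.log N / q)⁻¹ := by
      simp [eq', hqT]
    rw [h1]
    have h2 : 1 ≤ ∏ p ∈ (Nat.primesBelow N).erase q, eq' N q p T := by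
      rw [← Finset.prod_const_one (s := (Nat.primesBelow N).erase q)]
      refine Finset.prod_le_prod (fun _ _ => zero_le_one) fun p hp => ?_
      have := Finset.ne_of_mem_erase hp
      simp only [eq', this, if_false]
      split_ifs <;> norm_num
    refine le_mul_of_one_le_right ?_ h2
    have := Real.log_natCast_nonneg q
    have := Real.log_natCast_nonneg N
    positivity

noncomputable def fq (q p : ℕ) : ℝ := if p < q then 1 / (p:ℝ) else 8 / p
noncomputable def gg (N q p : ℕ) : ℝ :=
  if p < q then (1 - 1 / (p:ℝ))^2 else if p = q then 4 / (q * (Real.log q / Real.log N)) else (1 + 2/(p:ℝ))^2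

lemma Qq_bound : ∃ K : ℝ, 0 < K ∧ ∀ (N : ℕ) (_ : 2 ≤ N) (E : ℝ) (_ : 0 < E) (_ : 30 * Real.log N ≤ Real.log E)
    (odd : Bool) (q : ℕ) (_ : q ∈ Nat.primesBelow N),
    ∑ T ∈ (Nat.primesBelow N).powerset, (∏ p ∈ T, (p:ℝ)) * ((gq E odd (Nat.primesBelow N) T q)^2 / cq N q T)
      ≤ K / (Real.log N)^2 * (Real.log q / q) := by
  obtain ⟨C1, hC1, hmain⟩ := prod_main_bound
  obtain ⟨c, hc, hlow⟩ := VV_lower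
  refine ⟨12 * C1 * (1/c)^14, by positivity, ?_⟩
  intro N hN E hE hwE odd q hqP
  set P := Nat.primesBelow N with hP
  have hqp := Nat.prime_of_mem_primesBelow hqP
  have hqN := Nat.lt_of_mem_primesBelow hqP
  have hq2 : (2:ℝ) ≤ q := by exact_mod_cast hqp.two_le
  have hlq : 0 < Real.log q := Real.log_pos (by linarith)
  have hlN : 0 < Real.log N := Real.log_pos (by exact_mod_cast hN)
  have hlqN : Real.log q ≤ Real.log N := Real.log_le_log (by linarith) (by exact_mod_cast hqN.le)
  set v := Real.log q / Real.log N with hv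
  have hv0 : 0 < v := by positivity
  have hv1 : v ≤ 1 := by rw [hv, div_le_one hlN]; exact hlqN
  have hstep : ∀ T ∈ P.powerset, (∏ p ∈ T, (p:ℝ)) * ((gq E odd P T q)^2 / cq N q T) ≤
      v^38 * ∏ p ∈ P, (if p ∈ T then fq q p else gg N q p) := by
    intro T hT
    rw [Finset.mem_powerset] at hT
    have h1 := gq_bound N hN E hE hwE odd T q hqP
    have h2 := cq_inv_le N q hqP T hT
    have h3 : (gq E odd P T q)^2 ≤ (v^19 * ∏ p ∈ P, hq q p T)^2 := sq_le_sq' (by linarith [neg_abs_le (gq E odd P T q)]) ((le_abs_self _).trans h1)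
    have h4 : (∏ p ∈ T, (p:ℝ)) = ∏ p ∈ P, (if p ∈ T then (p:ℝ) else 1) := by
      rw [Finset.prod_ite_mem, Finset.inter_eq_right.2 hT]
    have hcn : 0 ≤ (cq N q T)⁻¹ := by
      rw [inv_nonneg]; unfold cq
      split_ifs <;> positivity
    calc _ ≤ (∏ p ∈ T, (p:ℝ)) * ((v^19 * ∏ p ∈ P, hq q p T)^2 * ∏ p ∈ P, eq' N q p T) := by
          rw [div_eq_mul_inv]
          gcongr
      _ = v^38 * ∏ p ∈ P, ((if p ∈ T then (p:ℝ) else 1) * ((hq q p T)^2 * eq' N q p T)) := by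
          rw [h4, Finset.prod_mul_distrib, Finset.prod_mul_distrib, Finset.prod_pow]; ring
      _ = _ := by
          congr 1
          refine Finset.prod_congr rfl fun p hp => ?_
          have hp0 : (0:ℝ) < p := by exact_mod_cast (Nat.prime_of_mem_primesBelow hp).pos
          unfold hq eq' fq gg
          by_cases a : p < q
          · by_cases b : p ∈ T
            · simp only [a, b, if_true]; field_simp
            · simp only [a, b, if_true, if_false]; ring
          · by_cases b : p ∈ T
            · by_cases d : p = q
              · subst d; simp only [a, b, if_true, if_false]; field_simp; ring
              · simp only [a, b, d, if_true, if_false]; field_simp; ring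
            · by_cases d : p = q
              · subst d; simp only [a, b, if_true, if_false]; rw [← hv]; field_simp; ring
              · simp only [a, b, d, if_false]; ring
  refine (Finset.sum_le_sum hstep).trans ?_
  rw [← Finset.mul_sum, sum_powerset_prod]
  -- bound the product
  have hV0 := VV_pos N
  have hprod : ∏ p ∈ P, (fq q p + gg N q p) ≤ (C1 * VV q) * (12 / (q * v) * (VV (q+1) / VV N)^14) := by
    rw [← Finset.prod_filter_mul_prod_filter_not P (· < q)]
    have e1 : P.filter (· < q) = Nat.primesBelow q := by
      ext p; simp only [hP, Finset.mem_filter, Nat.mem_primesBelow]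
      constructor
      · rintro ⟨⟨a, b⟩, c⟩; exact ⟨c, b⟩
      · rintro ⟨a, b⟩; exact ⟨⟨by omega, b⟩, a⟩
    have e2 : P.filter (fun p => ¬ p < q) = insert q (P.filter (q + 1 ≤ ·)) := by
      ext p; simp only [Finset.mem_filter, Finset.mem_insert]
      constructor
      · rintro ⟨a, b⟩
        rcases Nat.lt_or_ge q p with h | h
        · exact Or.inr ⟨a, h⟩
        · left; omega
      · rintro (rfl | ⟨a, b⟩)
        · exact ⟨hqP, by omega⟩
        · exact ⟨a, by omega⟩
    rw [e1, e2, Finset.prod_insert (by simp)]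
    have b1 : ∏ p ∈ Nat.primesBelow q, (fq q p + gg N q p) ≤ C1 * VV q := by
      refine le_trans (le_of_eq ?_) (hmain q)
      refine Finset.prod_congr rfl fun p hp => ?_
      have := Nat.lt_of_mem_primesBelow hp
      simp [fq, gg, this]
    have b2 : fq q q + gg N q q ≤ 12 / (q * v) := by
      simp only [fq, gg, lt_irrefl, if_false, if_true]
      rw [← hv]
      have : 8 / (q:ℝ) ≤ 8 / (q * v) := by
        gcongr
        exact mul_le_of_le_one_right (by linarith) hv1
      calc _ ≤ 8 / (q * v) + 4 / (q * v) := by gcongr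
        _ = _ := by ring
    have b3 : ∏ p ∈ P.filter (q + 1 ≤ ·), (fq q p + gg N q p) ≤ (VV (q+1) / VV N)^14 := by
      have := prod_ratio_bound (q+1) N 14 hqN (fun p => 8 / (p:ℝ) + (1 + 2/(p:ℝ))^2) (by
        intro p hp
        have hp2 : (2:ℝ) ≤ p := by exact_mod_cast hp.two_le
        refine ⟨by positivity, ?_⟩
        have hi : 1/(p:ℝ) ≤ 1/2 := by rw [one_div_le_one_div (by linarith) (by norm_num)]; exact hp2
        have hi0 : 0 < 1/(p:ℝ) := by positivity
        rw [show 8 / (p:ℝ) = 8 * (1/p) by ring, show 2 / (p:ℝ) = 2 * (1/p) by ring]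
        push_cast
        rw [show 14 / (p:ℝ) = 14 * (1/p) by ring]
        nlinarith)
      refine le_trans (le_of_eq ?_) this
      refine Finset.prod_congr rfl fun p hp => ?_
      have := (Finset.mem_filter.1 hp).2
      simp only [fq, gg]
      rw [if_neg (by omega), if_neg (by omega), if_neg (by omega)]
    have n0 : ∀ p, 0 ≤ fq q p + gg N q p := by
      intro p; unfold fq gg; rw [← hv]
      split_ifs <;> positivity
    have hVq := VV_pos q
    refine mul_le_mul b1 (mul_le_mul b2 b3 (Finset.prod_nonneg fun p _ => n0 p) (by positivity)) (mul_nonneg (n0 _) (Finset.prod_nonneg fun p _ => n0 p)) (by positivity)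
  have u1 : VV q ≤ 1 / Real.log q := VV_upper q hqp.two_le
  have u2 : VV (q+1) / VV N ≤ (1/c) * (1/v) := by
    have a1 : VV (q+1) ≤ 1 / Real.log q := by
      refine (VV_upper (q+1) (by have := hqp.two_le; omega)).trans ?_
      gcongr
      omega
    have a2 := hlow N hN
    rw [div_le_iff₀ hlN] at a2
    rw [div_le_iff₀ hV0]
    calc VV (q+1) ≤ 1 / Real.log q := a1
      _ = (1/c) * (1/v) * (c / Real.log N) := by rw [hv]; field_simp
      _ ≤ _ := by gcongr; rw [div_le_iff₀ hlN]; exact a2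
  have hVq1 := VV_pos (q+1)
  calc v^38 * ∏ p ∈ P, (fq q p + gg N q p) ≤ v^38 * ((C1 * (1 / Real.log q)) * (12 / (q * v) * ((1/c) * (1/v))^14)) := by
        gcongr
        refine hprod.trans ?_
        gcongr
    _ = (12 * C1 * (1/c)^14) * (1 / (q * Real.log q)) * v^23 := by
        rw [mul_pow]; field_simp
    _ ≤ (12 * C1 * (1/c)^14) * (1 / (q * Real.log q)) * v^2 := by
        refine mul_le_mul_of_nonneg_left (pow_le_pow_of_le_one hv0.le hv1 (by norm_num)) (by positivity)
    _ = _ := by rw [hv]; field_simp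

noncomputable def rho (E : ℝ) (odd : Bool) (S : Finset ℕ) : ℝ :=
  if passp E 30 odd S then (-1)^S.card else 0

lemma R_bound : ∃ K : ℝ, 0 < K ∧ ∀ (N : ℕ) (_ : 2 ≤ N) (E : ℝ) (_ : 0 < E) (_ : 30 * Real.log N ≤ Real.log E)
    (odd : Bool),
    ∑ T ∈ (Nat.primesBelow N).powerset, (∏ p ∈ T, (p:ℝ)) *
      (∑ S ∈ (Nat.primesBelow N).powerset, rho E odd S * KK (Nat.primesBelow N) T S)^2 ≤ K / Real.log N := by
  obtain ⟨C1, hC1, hmain⟩ := prod_main_bound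
  obtain ⟨K, hK, hQ⟩ := Qq_bound
  refine ⟨2 * C1 + 24 * K, by positivity, ?_⟩
  intro N hN E hE hwE odd
  set P := Nat.primesBelow N with hP
  have hlN : 0 < Real.log N := Real.log_pos (by exact_mod_cast hN)
  have hdec : ∀ T, ∑ S ∈ P.powerset, rho E odd S * KK P T S =
      ∑ S ∈ P.powerset, (-1:ℝ)^S.card * KK P T S - ∑ q ∈ P, gq E odd P T q := by
    intro T
    unfold gq
    rw [Finset.sum_comm, ← Finset.sum_sub_distrib]
    refine Finset.sum_congr rfl fun S hS => ?_
    rw [Finset.mem_powerset] at hS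
    rw [← Finset.sum_mul, ← sub_mul]
    congr 1
    have h1 : rho E odd S = (-1)^S.card * (if passp E 30 odd S then (1:ℝ) else 0) := by
      unfold rho; split_ifs <;> simp
    rw [h1, pass_decomp, mul_sub, mul_one]
    congr 1
    rw [Finset.mul_sum, ← Finset.inter_eq_right.2 hS, ← Finset.filter_mem_eq_inter, Finset.sum_filter]
    refine Finset.sum_congr rfl fun q hq => ?_
    simp only [Finset.filter_mem_eq_inter, Finset.inter_eq_right.2 hS]
    by_cases a : q ∈ S <;> simp [a]
  have hcp : ∀ q ∈ P, ∀ T, 0 < cq N q T := by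
    intro q hq T
    have hqp := Nat.prime_of_mem_primesBelow hq
    have hq2 : (2:ℝ) ≤ q := by exact_mod_cast hqp.two_le
    have hlq : 0 < Real.log q := Real.log_pos (by linarith)
    unfold cq; split_ifs <;> positivity
  have hT : ∀ T ∈ P.powerset, (∏ p ∈ T, (p:ℝ)) * (∑ S ∈ P.powerset, rho E odd S * KK P T S)^2 ≤
      2 * ((∏ p ∈ T, (p:ℝ)) * (∑ S ∈ P.powerset, (-1:ℝ)^S.card * KK P T S)^2) +
      8 * ∑ q ∈ P, (∏ p ∈ T, (p:ℝ)) * ((gq E odd P T q)^2 / cq N q T) := by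
    intro T hT
    rw [Finset.mem_powerset] at hT
    have hcs : (∑ q ∈ P, gq E odd P T q)^2 ≤ 4 * ∑ q ∈ P, (gq E odd P T q)^2 / cq N q T := by
      have h1 := Finset.sum_sq_le_sum_mul_sum_of_sq_le_mul P (r := fun q => gq E odd P T q)
        (f := fun q => cq N q T) (g := fun q => (gq E odd P T q)^2 / cq N q T)
        (fun q hq => (hcp q hq T).le) (fun q hq => div_nonneg (sq_nonneg _) (hcp q hq T).le)
        (fun q hq => by rw [mul_div_cancel₀ _ (hcp q hq T).ne'])
      refine h1.trans ?_
      refine mul_le_mul_of_nonneg_right (cq_sum N hN T hT) (Finset.sum_nonneg fun q hq => div_nonneg (sq_nonneg _) (hcp q hq T).le)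
    rw [hdec T, ← Finset.mul_sum]
    set a := ∑ S ∈ P.powerset, (-1:ℝ)^S.card * KK P T S
    set b := ∑ q ∈ P, gq E odd P T q
    set s := ∑ q ∈ P, (gq E odd P T q)^2 / cq N q T
    have h0 : 0 ≤ ∏ p ∈ T, (p:ℝ) := Finset.prod_nonneg fun _ _ => Nat.cast_nonneg _
    have h2 : (a - b)^2 ≤ 2 * a^2 + 8 * s := by nlinarith [sq_nonneg (a+b)]
    calc _ ≤ (∏ p ∈ T, (p:ℝ)) * (2 * a^2 + 8 * s) := by gcongr
      _ = _ := by ring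
  refine (Finset.sum_le_sum hT).trans ?_
  rw [Finset.sum_add_distrib, ← Finset.mul_sum, ← Finset.mul_sum, Finset.sum_comm]
  have hA : ∑ T ∈ P.powerset, (∏ p ∈ T, (p:ℝ)) * (∑ S ∈ P.powerset, (-1:ℝ)^S.card * KK P T S)^2 ≤ C1 / Real.log N := by
    have h1 : ∑ T ∈ P.powerset, (∏ p ∈ T, (p:ℝ)) * (∑ S ∈ P.powerset, (-1:ℝ)^S.card * KK P T S)^2 =
        ∏ p ∈ P, (1 / (p:ℝ) + (1 - 1 / (p:ℝ))^2) := by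
      rw [← sum_powerset_prod]
      refine Finset.sum_congr rfl fun T hT => ?_
      rw [Finset.mem_powerset] at hT
      have h4 : (∏ p ∈ T, (p:ℝ)) = ∏ p ∈ P, (if p ∈ T then (p:ℝ) else 1) := by
        rw [Finset.prod_ite_mem, Finset.inter_eq_right.2 hT]
      rw [← sq_abs, abs_mu_KK P T (fun p hp => Nat.prime_of_mem_primesBelow hp), h4, ← Finset.prod_pow, ← Finset.prod_mul_distrib]
      refine Finset.prod_congr rfl fun p hp => ?_
      have hp0 : (0:ℝ) < p := by exact_mod_cast (Nat.prime_of_mem_primesBelow hp).pos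
      split_ifs
      · field_simp
      · ring
    rw [h1]
    refine (hmain N).trans ?_
    have := VV_upper N hN
    calc C1 * VV N ≤ C1 * (1 / Real.log N) := by gcongr
      _ = _ := by ring
  have hB : ∑ q ∈ P, ∑ T ∈ P.powerset, (∏ p ∈ T, (p:ℝ)) * ((gq E odd P T q)^2 / cq N q T) ≤ 3 * K / Real.log N := by
    refine (Finset.sum_le_sum fun q hq => hQ N hN E hE hwE odd q hq).trans ?_
    rw [← Finset.mul_sum]
    have h2 := sum_log_div_le N (by omega)
    have h3 := log_four_le hN
    calc _ ≤ K / (Real.log N)^2 * (3 * Real.log N) := by gcongr; linarith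
      _ = _ := by field_simp
  calc _ ≤ 2 * (C1 / Real.log N) + 8 * (3 * K / Real.log N) := by gcongr
    _ = _ := by ring



lemma L_bound (M N : ℕ) (h : M ≤ N) (lam : Finset ℕ → ℝ) (hlam : ∀ S, |lam S| ≤ 1) :
    ∑ T ∈ ((Nat.primesBelow N).filter (M ≤ ·)).powerset, (∏ p ∈ T, (p:ℝ)) *
      (∑ S ∈ ((Nat.primesBelow N).filter (M ≤ ·)).powerset,
        lam S * KK ((Nat.primesBelow N).filter (M ≤ ·)) T S)^2 ≤ (VV M / VV N)^4 := by
  set H := (Nat.primesBelow N).filter (M ≤ ·) with hH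
  have hb : ∀ T, |∑ S ∈ H.powerset, lam S * KK H T S| ≤
      ∏ p ∈ H, (1 * (1 / (p:ℝ)) + if p ∈ T then 0 else 1) := by
    intro T
    rw [← sum_pow_KK]
    refine (Finset.abs_sum_le_sum_abs _ _).trans (Finset.sum_le_sum fun S _ => ?_)
    rw [abs_mul, abs_of_nonneg (KK_nonneg H T S), one_pow]
    exact mul_le_mul_of_nonneg_right (hlam S) (KK_nonneg H T S)
  calc _ ≤ ∑ T ∈ H.powerset, ∏ p ∈ H, (if p ∈ T then 1 / (p:ℝ) else (1 + 1 / (p:ℝ))^2) := by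
        refine Finset.sum_le_sum fun T hT => ?_
        rw [Finset.mem_powerset] at hT
        have h4 : (∏ p ∈ T, (p:ℝ)) = ∏ p ∈ H, (if p ∈ T then (p:ℝ) else 1) := by
          rw [Finset.prod_ite_mem, Finset.inter_eq_right.2 hT]
        have h0 : 0 ≤ ∏ p ∈ T, (p:ℝ) := Finset.prod_nonneg fun _ _ => Nat.cast_nonneg _
        calc _ ≤ (∏ p ∈ T, (p:ℝ)) * (∏ p ∈ H, (1 * (1 / (p:ℝ)) + if p ∈ T then 0 else 1))^2 := by
              rw [← sq_abs]
              gcongr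
              exact hb T
          _ = _ := by
              rw [h4, ← Finset.prod_pow, ← Finset.prod_mul_distrib]
              refine Finset.prod_congr rfl fun p hp => ?_
              have hp0 : (0:ℝ) < p := by
                exact_mod_cast (Nat.prime_of_mem_primesBelow (Finset.mem_filter.1 hp).1).pos
              split_ifs
              · field_simp; ring
              · ring
    _ = ∏ p ∈ H, (1 / (p:ℝ) + (1 + 1 / (p:ℝ))^2) := sum_powerset_prod _ _ _
    _ ≤ _ := by
        refine prod_ratio_bound M N 4 h (fun p => 1 / (p:ℝ) + (1 + 1 / (p:ℝ))^2) fun p hp => ⟨by positivity, ?_⟩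
        have hp2 : (1:ℝ) ≤ p := by exact_mod_cast hp.one_lt.le
        have h1 : 1 / (p:ℝ) ≤ 1 := by rw [div_le_one (by linarith)]; exact hp2
        have h2 : 0 ≤ 1 / (p:ℝ) := by positivity
        have h3 : (4:ℕ) / (p:ℝ) = 4 * (1 / (p:ℝ)) := by push_cast; ring
        rw [h3]
        nlinarith

noncomputable def lamw (D : ℝ) (odd : Bool) (S : Finset ℕ) : ℝ :=
  if passp D 2 odd S then (-1)^S.card else 0

lemma lamw_abs (D : ℝ) (odd : Bool) (S : Finset ℕ) : |lamw D odd S| ≤ 1 := by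
  unfold lamw; split_ifs
  · rw [abs_pow]; simp
  · simp

noncomputable def aAB (D E : ℝ) (A B : Finset ℕ) : ℝ :=
  lamw D true B * rho E false A + lamw D false B * rho E true A - lamw D true B * rho E true A

lemma mem_U (w : ℝ) (p : ℕ) : p ∈ Nat.primesBelow ⌈w⌉₊ ↔ p.Prime ∧ (p:ℝ) < w := by
  rw [Nat.mem_primesBelow, Nat.lt_ceil, and_comm]

lemma mem_W (w z : ℝ) (p : ℕ) : p ∈ (Nat.primesBelow ⌈z⌉₊).filter (⌈w⌉₊ ≤ ·) ↔
    p.Prime ∧ w ≤ (p:ℝ) ∧ (p:ℝ) < z := by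
  rw [Finset.mem_filter, mem_U, Nat.ceil_le]; tauto

lemma UW_disj (w z : ℝ) : Disjoint (Nat.primesBelow ⌈w⌉₊) ((Nat.primesBelow ⌈z⌉₊).filter (⌈w⌉₊ ≤ ·)) := by
  rw [Finset.disjoint_left]
  intro p hp hp'
  rw [mem_U] at hp; rw [mem_W] at hp'
  linarith [hp.2, hp'.2.1]

lemma alpha_prod (w z D E : ℝ) (hwz : w ≤ z) (A B : Finset ℕ) (hA : A ⊆ Nat.primesBelow ⌈w⌉₊)
    (hB : B ⊆ (Nat.primesBelow ⌈z⌉₊).filter (⌈w⌉₊ ≤ ·)) :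
    alphaMinus w z D E (∏ p ∈ A ∪ B, p) = aAB D E A B := by
  have hA' : ∀ p ∈ A, p.Prime ∧ (p:ℝ) < w := fun p hp => (mem_U w p).1 (hA hp)
  have hB' : ∀ p ∈ B, p.Prime ∧ w ≤ (p:ℝ) ∧ (p:ℝ) < z := fun p hp => (mem_W w z p).1 (hB hp)
  have hAB : ∀ p ∈ A ∪ B, p.Prime := by
    intro p hp
    rcases Finset.mem_union.1 hp with h | h
    · exact (hA' p h).1
    · exact (hB' p h).1
  have hpf : (∏ p ∈ A ∪ B, p).primeFactors = A ∪ B := Nat.primeFactors_prod hAB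
  have h1 : gcdPart w z (∏ p ∈ A ∪ B, p) = ∏ p ∈ B, p := by
    unfold gcdPart
    rw [hpf]
    congr 1
    ext p
    simp only [Finset.mem_filter, Finset.mem_union]
    constructor
    · rintro ⟨h | h, h2, h3⟩
      · linarith [(hA' p h).2]
      · exact h
    · intro h; exact ⟨Or.inr h, (hB' p h).2⟩
  have h2 : gcdPart 0 w (∏ p ∈ A ∪ B, p) = ∏ p ∈ A, p := by
    unfold gcdPart
    rw [hpf]
    congr 1
    ext p
    simp only [Finset.mem_filter, Finset.mem_union]
    constructor
    · rintro ⟨h | h, h2, h3⟩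
      · exact h
      · linarith [(hB' p h).2.1]
    · intro h; exact ⟨Or.inl h, Nat.cast_nonneg _, (hA' p h).2⟩
  have h3 : dividesPrimorial z (∏ p ∈ A ∪ B, p) := by
    refine ⟨squarefree_prod_primes _ hAB, ?_⟩
    rw [hpf]
    intro p hp
    rcases Finset.mem_union.1 hp with h | h
    · linarith [(hA' p h).2]
    · exact (hB' p h).2.2
  have h4 : ∀ odd, sieveWeight w z D 2 odd (∏ p ∈ B, p) = lamw D odd B := by
    intro odd
    rw [sieveWeight_prod _ _ _ _ _ _ (fun p hp => (hB' p hp).1)]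
    unfold lamw
    have : ∀ p ∈ B, w ≤ (p:ℝ) ∧ (p:ℝ) < z := fun p hp => (hB' p hp).2
    rw [if_congr (and_iff_right this) rfl rfl]
  have h5 : ∀ odd, sieveWeight 0 w E 30 odd (∏ p ∈ A, p) = rho E odd A := by
    intro odd
    rw [sieveWeight_prod _ _ _ _ _ _ (fun p hp => (hA' p hp).1)]
    unfold rho
    have : ∀ p ∈ A, (0:ℝ) ≤ (p:ℝ) ∧ (p:ℝ) < w := fun p hp => ⟨Nat.cast_nonneg _, (hA' p hp).2⟩
    rw [if_congr (and_iff_right this) rfl rfl]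
  rw [alphaMinus, if_pos h3, h1, h2, h4, h4, h5, h5, one_mul, aAB]

lemma aAB_supp (w z D E : ℝ) (hE : 1 ≤ E) (hD : 1 ≤ D) (hwE : w ≤ E) (hzD : z ≤ D)
    (A B : Finset ℕ) (hA : A ⊆ Nat.primesBelow ⌈w⌉₊)
    (hB : B ⊆ (Nat.primesBelow ⌈z⌉₊).filter (⌈w⌉₊ ≤ ·)) (h : aAB D E A B ≠ 0) :
    ∏ p ∈ A ∪ B, (p:ℝ) ≤ D * E := by
  have hA' : ∀ p ∈ A, p.Prime ∧ (p:ℝ) < w := fun p hp => (mem_U w p).1 (hA hp)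
  have hB' : ∀ p ∈ B, p.Prime ∧ w ≤ (p:ℝ) ∧ (p:ℝ) < z := fun p hp => (mem_W w z p).1 (hB hp)
  have hd : Disjoint A B := Finset.disjoint_of_subset_left hA (Finset.disjoint_of_subset_right hB (UW_disj w z))
  have a1 : ∀ odd, rho E odd A ≠ 0 → ∏ p ∈ A, (p:ℝ) ≤ E := by
    intro odd ho
    have hp : passp E 30 odd A := by
      by_contra hc; exact ho (by rw [rho, if_neg hc])
    exact pass_support w E 30 (by norm_num) odd A (fun p hp => (hA' p hp).1) (fun p hp => (hA' p hp).2) hE hwE hp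
  have a2 : ∀ odd, lamw D odd B ≠ 0 → ∏ p ∈ B, (p:ℝ) ≤ D := by
    intro odd ho
    have hp : passp D 2 odd B := by
      by_contra hc; exact ho (by rw [lamw, if_neg hc])
    exact pass_support z D 2 (by norm_num) odd B (fun p hp => (hB' p hp).1) (fun p hp => (hB' p hp).2.2) hD hzD hp
  rw [Finset.prod_union hd, mul_comm]
  have hA1 : ∏ p ∈ A, (p:ℝ) ≤ E := by
    by_contra hc
    have : ∀ odd, rho E odd A = 0 := fun odd => by by_contra h'; exact hc (a1 odd h')
    exact h (by simp [aAB, this])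
  have hB1 : ∏ p ∈ B, (p:ℝ) ≤ D := by
    by_contra hc
    have : ∀ odd, lamw D odd B = 0 := fun odd => by by_contra h'; exact hc (a2 odd h')
    exact h (by simp [aAB, this])
  exact mul_le_mul hB1 hA1 (Finset.prod_nonneg fun _ _ => Nat.cast_nonneg _) (by linarith)



lemma KK_eq (P T S : Finset ℕ) (hS : S ⊆ P) (hT : T ⊆ P) :
    KK P T S = if T ⊆ S then 1 / ∏ p ∈ S, (p:ℝ) else 0 := by
  unfold KK
  split_ifs with h
  · rw [one_div, ← Finset.prod_inv_distrib, ← Finset.inter_eq_right.2 hS, ← Finset.prod_ite_mem,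
      Finset.inter_eq_right.2 hS]
    refine Finset.prod_congr rfl fun p _ => ?_
    by_cases h1 : p ∈ S
    · simp [h1]
    · have h2 : p ∉ T := fun hp => h1 (h hp)
      simp [h1, h2]
  · obtain ⟨p, hp, hpS⟩ := Finset.not_subset.1 h
    refine Finset.prod_eq_zero (hT hp) ?_
    rw [if_neg hpS, if_pos hp]

lemma inner_eq (P : Finset ℕ) (hP : ∀ p ∈ P, p.Prime) (α : ℕ → ℝ) (Y : ℕ)
    (h1 : ∀ m, 1 ≤ m → α m ≠ 0 → Squarefree m ∧ m.primeFactors ⊆ P)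
    (h2 : ∀ S ⊆ P, α (∏ p ∈ S, p) ≠ 0 → ∏ p ∈ S, p ≤ Y) (d : ℕ) (hd : Squarefree d) (hdP : d.primeFactors ⊆ P) :
    ∑ m ∈ (Finset.Icc 1 Y).filter (fun m => d ∣ m), α m / m =
      ∑ S ∈ P.powerset, α (∏ p ∈ S, p) * KK P d.primeFactors S := by
  have hpos : ∀ S ⊆ P, 1 ≤ ∏ p ∈ S, p := fun S hS =>
    Finset.prod_pos fun p hp => (hP p (hS hp)).pos
  refine Finset.sum_bij_ne_zero (fun m _ _ => m.primeFactors) ?_ ?_ ?_ ?_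
  · intro m hm hne
    simp only [Finset.mem_filter, Finset.mem_Icc] at hm
    have := h1 m hm.1.1 (fun h => hne (by rw [h, zero_div]))
    exact Finset.mem_powerset.2 this.2
  · intro m hm hne m' hm' hne' heq
    simp only [Finset.mem_filter, Finset.mem_Icc] at hm hm'
    have a := h1 m hm.1.1 (fun h => hne (by rw [h, zero_div]))
    have b := h1 m' hm'.1.1 (fun h => hne' (by rw [h, zero_div]))
    rw [← Nat.prod_primeFactors_of_squarefree a.1, ← Nat.prod_primeFactors_of_squarefree b.1]
    rw [heq]
  · intro S hS hne
    rw [Finset.mem_powerset] at hS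
    have hα : α (∏ p ∈ S, p) ≠ 0 := fun h => hne (by rw [h, zero_mul])
    have hK : KK P d.primeFactors S ≠ 0 := fun h => hne (by rw [h, mul_zero])
    rw [KK_eq P _ S hS hdP] at hK
    have hsub : d.primeFactors ⊆ S := by by_contra hc; exact hK (if_neg hc)
    refine ⟨∏ p ∈ S, p, ?_, ?_, ?_⟩
    · simp only [Finset.mem_filter, Finset.mem_Icc]
      refine ⟨⟨hpos S hS, h2 S hS hα⟩, ?_⟩
      rw [← Nat.prod_primeFactors_of_squarefree hd]
      exact Finset.prod_dvd_prod_of_subset _ _ _ hsub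
    · refine div_ne_zero hα ?_
      have := hpos S hS
      exact_mod_cast (by omega : ∏ p ∈ S, p ≠ 0)
    · exact Nat.primeFactors_prod (fun p hp => hP p (hS hp))
  · intro m hm hne
    simp only [Finset.mem_filter, Finset.mem_Icc] at hm
    have a := h1 m hm.1.1 (fun h => hne (by rw [h, zero_div]))
    rw [KK_eq P _ _ a.2 hdP, if_pos (Nat.primeFactors_mono hm.2 (by omega)),
      Nat.prod_primeFactors_of_squarefree a.1]
    have : ∏ p ∈ m.primeFactors, (p:ℝ) = m := by
      rw [← Nat.cast_prod, Nat.prod_primeFactors_of_squarefree a.1]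
    rw [this]; ring

lemma outer_le (P : Finset ℕ) (hP : ∀ p ∈ P, p.Prime) (α : ℕ → ℝ) (Y : ℕ)
    (h1 : ∀ m, 1 ≤ m → α m ≠ 0 → Squarefree m ∧ m.primeFactors ⊆ P)
    (h2 : ∀ S ⊆ P, α (∏ p ∈ S, p) ≠ 0 → ∏ p ∈ S, p ≤ Y) :
    ∑ d ∈ Finset.Icc 1 Y, (d:ℝ) * (∑ m ∈ (Finset.Icc 1 Y).filter (fun m => d ∣ m), α m / m)^2 ≤
      ∑ T ∈ P.powerset, (∏ p ∈ T, (p:ℝ)) * (∑ S ∈ P.powerset, α (∏ p ∈ S, p) * KK P T S)^2 := by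
  set Q := (Finset.Icc 1 Y).filter (fun d => Squarefree d ∧ d.primeFactors ⊆ P) with hQ
  have e1 : ∑ d ∈ Finset.Icc 1 Y, (d:ℝ) * (∑ m ∈ (Finset.Icc 1 Y).filter (fun m => d ∣ m), α m / m)^2 =
      ∑ d ∈ Q, (d:ℝ) * (∑ m ∈ (Finset.Icc 1 Y).filter (fun m => d ∣ m), α m / m)^2 := by
    symm
    refine Finset.sum_subset (Finset.filter_subset _ _) fun d hd hdQ => ?_
    have : ∑ m ∈ (Finset.Icc 1 Y).filter (fun m => d ∣ m), α m / m = 0 := by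
      refine Finset.sum_eq_zero fun m hm => ?_
      simp only [Finset.mem_filter, Finset.mem_Icc] at hm
      by_contra hne
      have a := h1 m hm.1.1 (fun h => hne (by rw [h, zero_div]))
      refine hdQ (Finset.mem_filter.2 ⟨hd, a.1.squarefree_of_dvd hm.2, ?_⟩)
      exact (Nat.primeFactors_mono hm.2 (by omega)).trans a.2
    rw [this]; ring
  set G : Finset ℕ → ℝ := fun T => (∏ p ∈ T, (p:ℝ)) * (∑ S ∈ P.powerset, α (∏ p ∈ S, p) * KK P T S)^2 with hG
  have e2 : ∑ d ∈ Q, (d:ℝ) * (∑ m ∈ (Finset.Icc 1 Y).filter (fun m => d ∣ m), α m / m)^2 =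
      ∑ d ∈ Q, G d.primeFactors := by
    refine Finset.sum_congr rfl fun d hd => ?_
    have hd' := (Finset.mem_filter.1 hd).2
    rw [inner_eq P hP α Y h1 h2 d hd'.1 hd'.2, hG]
    have : ∏ p ∈ d.primeFactors, (p:ℝ) = d := by
      rw [← Nat.cast_prod, Nat.prod_primeFactors_of_squarefree hd'.1]
    simp only [this]
  have inj : Set.InjOn (fun d : ℕ => d.primeFactors) (Q : Set ℕ) := by
    intro a ha b hb hab
    have ha' := (Finset.mem_filter.1 (Finset.mem_coe.1 ha)).2
    have hb' := (Finset.mem_filter.1 (Finset.mem_coe.1 hb)).2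
    simp only at hab
    rw [← Nat.prod_primeFactors_of_squarefree ha'.1, ← Nat.prod_primeFactors_of_squarefree hb'.1, hab]
  rw [e1, e2, ← Finset.sum_image (f := G) inj]
  refine Finset.sum_le_sum_of_subset_of_nonneg ?_ fun T _ _ => ?_
  · intro T hT
    obtain ⟨d, hd, rfl⟩ := Finset.mem_image.1 hT
    exact Finset.mem_powerset.2 (Finset.mem_filter.1 hd).2.2
  · exact mul_nonneg (Finset.prod_nonneg fun _ _ => Nat.cast_nonneg _) (sq_nonneg _)

lemma KK_congr (U T T' A : Finset ℕ) (h : ∀ p ∈ U, p ∈ T ↔ p ∈ T') : KK U T A = KK U T' A := by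
  unfold KK
  exact Finset.prod_congr rfl fun p hp => by simp only [h p hp]

/-- one-variable mean square -/
noncomputable def MS (U : Finset ℕ) (f : Finset ℕ → ℝ) : ℝ :=
  ∑ T ∈ U.powerset, (∏ p ∈ T, (p:ℝ)) * (∑ S ∈ U.powerset, f S * KK U T S)^2

lemma MS_nonneg (U : Finset ℕ) (f : Finset ℕ → ℝ) : 0 ≤ MS U f :=
  Finset.sum_nonneg fun _ _ => mul_nonneg (Finset.prod_nonneg fun _ _ => Nat.cast_nonneg _) (sq_nonneg _)

lemma MS_bilinear (U W : Finset ℕ) (h : Disjoint U W) (F : Finset ℕ → ℝ) (l1 l2 r1 r2 : Finset ℕ → ℝ)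
    (hF : ∀ A ⊆ U, ∀ B ⊆ W, F (A ∪ B) = l1 B * r2 A + l2 B * r1 A - l1 B * r1 A) :
    MS (U ∪ W) F ≤ 3 * (MS W l1 * MS U r2 + MS W l2 * MS U r1 + MS W l1 * MS U r1) := by
  have hprod : ∀ l r, MS W l * MS U r = ∑ T1 ∈ U.powerset, ∑ T2 ∈ W.powerset,
      ((∏ p ∈ T1, (p:ℝ)) * (∏ p ∈ T2, (p:ℝ))) *
        ((∑ S ∈ W.powerset, l S * KK W T2 S) * (∑ S ∈ U.powerset, r S * KK U T1 S))^2 := by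
    intro l r
    unfold MS
    rw [mul_comm, Finset.sum_mul_sum]
    refine Finset.sum_congr rfl fun T1 _ => Finset.sum_congr rfl fun T2 _ => ?_
    ring
  rw [hprod, hprod, hprod, ← Finset.sum_add_distrib, ← Finset.sum_add_distrib, Finset.mul_sum]
  unfold MS
  rw [sum_powerset_split U W h]
  refine Finset.sum_le_sum fun T1 hT1 => ?_
  rw [← Finset.sum_add_distrib, ← Finset.sum_add_distrib, Finset.mul_sum]
  refine Finset.sum_le_sum fun T2 hT2 => ?_
  rw [Finset.mem_powerset] at hT1 hT2
  have hd := Finset.disjoint_left.1 h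
  rw [Finset.prod_union (Finset.disjoint_of_subset_left hT1 (Finset.disjoint_of_subset_right hT2 h))]
  have key : ∑ S ∈ (U ∪ W).powerset, F S * KK (U ∪ W) (T1 ∪ T2) S =
      (∑ S ∈ W.powerset, l1 S * KK W T2 S) * (∑ S ∈ U.powerset, r2 S * KK U T1 S) +
      (∑ S ∈ W.powerset, l2 S * KK W T2 S) * (∑ S ∈ U.powerset, r1 S * KK U T1 S) -
      (∑ S ∈ W.powerset, l1 S * KK W T2 S) * (∑ S ∈ U.powerset, r1 S * KK U T1 S) := by
    rw [sum_powerset_split U W h]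
    have e : ∀ l r : Finset ℕ → ℝ, (∑ S ∈ W.powerset, l S * KK W T2 S) * (∑ S ∈ U.powerset, r S * KK U T1 S) =
        ∑ A ∈ U.powerset, ∑ B ∈ W.powerset, (l B * r A) * (KK U T1 A * KK W T2 B) := by
      intro l r
      rw [mul_comm, Finset.sum_mul_sum]
      refine Finset.sum_congr rfl fun A _ => Finset.sum_congr rfl fun B _ => ?_
      ring
    rw [e, e, e, ← Finset.sum_add_distrib, ← Finset.sum_sub_distrib]
    refine Finset.sum_congr rfl fun A hA => ?_
    rw [← Finset.sum_add_distrib, ← Finset.sum_sub_distrib]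
    refine Finset.sum_congr rfl fun B hB => ?_
    rw [Finset.mem_powerset] at hA hB
    rw [hF A hA B hB, KK_union U W _ A B h hA hB, KK_congr U (T1 ∪ T2) T1 A ?_, KK_congr W (T1 ∪ T2) T2 B ?_]
    · ring
    · intro p hp
      rw [Finset.mem_union]
      exact ⟨fun h' => h'.elim (fun ha => absurd hp (hd (hT1 ha))) id, Or.inr⟩
    · intro p hp
      rw [Finset.mem_union]
      exact ⟨fun h' => h'.elim id fun hb => absurd (hT2 hb) (hd hp), Or.inl⟩
  rw [key]
  set x := (∑ S ∈ W.powerset, l1 S * KK W T2 S) * (∑ S ∈ U.powerset, r2 S * KK U T1 S)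
  set y := (∑ S ∈ W.powerset, l2 S * KK W T2 S) * (∑ S ∈ U.powerset, r1 S * KK U T1 S)
  set t := (∑ S ∈ W.powerset, l1 S * KK W T2 S) * (∑ S ∈ U.powerset, r1 S * KK U T1 S)
  have h0 : 0 ≤ (∏ p ∈ T1, (p:ℝ)) * (∏ p ∈ T2, (p:ℝ)) :=
    mul_nonneg (Finset.prod_nonneg fun _ _ => Nat.cast_nonneg _) (Finset.prod_nonneg fun _ _ => Nat.cast_nonneg _)
  have h3 : (x + y - t)^2 ≤ 3 * (x^2 + y^2 + t^2) := by
    nlinarith [sq_nonneg (x - y), sq_nonneg (x + t), sq_nonneg (y + t)]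
  calc _ ≤ _ := mul_le_mul_of_nonneg_left h3 h0
    _ = _ := by ring



lemma log_ceil_bounds (y : ℝ) (hy : 3 ≤ y) :
    2 ≤ ⌈y⌉₊ ∧ Real.log y ≤ Real.log ⌈y⌉₊ ∧ Real.log ⌈y⌉₊ ≤ 2 * Real.log y := by
  have h1 : y ≤ ⌈y⌉₊ := Nat.le_ceil y
  have h2 : (⌈y⌉₊:ℝ) < y + 1 := Nat.ceil_lt_add_one (by linarith)
  refine ⟨?_, Real.log_le_log (by linarith) h1, ?_⟩
  · have : (2:ℝ) ≤ ⌈y⌉₊ := by linarith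
    exact_mod_cast this
  · have : 2 * Real.log y = Real.log (y^2) := by rw [Real.log_pow]; norm_num
    rw [this]
    exact Real.log_le_log (by linarith) (by nlinarith)

lemma sum_le_MS (w z D E : ℝ) (hwz : w ≤ z) (hE : 1 ≤ E) (hD : 1 ≤ D) (hwE : w ≤ E) (hzD : z ≤ D) :
    ∑ d ∈ Finset.Icc 1 ⌊D * E⌋₊, (d:ℝ) *
      (∑ m ∈ (Finset.Icc 1 ⌊D * E⌋₊).filter (fun m => d ∣ m), alphaMinus w z D E m / m)^2 ≤
    MS (Nat.primesBelow ⌈w⌉₊ ∪ (Nat.primesBelow ⌈z⌉₊).filter (⌈w⌉₊ ≤ ·))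
      (fun S => alphaMinus w z D E (∏ p ∈ S, p)) := by
  unfold MS
  refine outer_le _ ?_ _ _ ?_ ?_
  · intro p hp
    rcases Finset.mem_union.1 hp with h | h
    · exact ((mem_U w p).1 h).1
    · exact ((mem_W w z p).1 h).1
  · intro m _ hm
    have hdp : dividesPrimorial z m := by
      by_contra hc; exact hm (by rw [alphaMinus, if_neg hc, zero_mul])
    refine ⟨hdp.1, fun p hp => ?_⟩
    have hpp := Nat.prime_of_mem_primeFactors hp
    rw [Finset.mem_union, mem_U, mem_W]
    rcases lt_or_ge (p:ℝ) w with h | h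
    · exact Or.inl ⟨hpp, h⟩
    · exact Or.inr ⟨hpp, h, hdp.2 p hp⟩
  · intro S hS hne
    obtain ⟨A, B, hA, hB, rfl⟩ : ∃ A B, A ⊆ Nat.primesBelow ⌈w⌉₊ ∧
        B ⊆ (Nat.primesBelow ⌈z⌉₊).filter (⌈w⌉₊ ≤ ·) ∧ S = A ∪ B := by
      refine ⟨S ∩ Nat.primesBelow ⌈w⌉₊, S ∩ (Nat.primesBelow ⌈z⌉₊).filter (⌈w⌉₊ ≤ ·),
        Finset.inter_subset_right, Finset.inter_subset_right, ?_⟩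
      rw [← Finset.inter_union_distrib_left]
      exact (Finset.inter_eq_left.2 hS).symm
    rw [alpha_prod w z D E hwz A B hA hB] at hne
    have := aAB_supp w z D E hE hD hwE hzD A B hA hB hne
    refine Nat.le_floor ?_
    rw [Nat.cast_prod]
    exact this

/-- Mean square bound for the weights `α⁻`: there is `δ₀ > 0` such that for
`δ ∈ (0, δ₀)` and all sufficiently large `X`, with `D = X^{5/9}`, `z = X^{5/36}`,
`w = X^δ`, `E = X^{1/1000}`,
`Σ_{d ≤ DE} d·(Σ_{m ≤ DE, d ∣ m} α_m⁻/m)² ≤ C(δ)/log X`. -/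
theorem alpha_minus_mean_square :
    ∃ δ₀ : ℝ, 0 < δ₀ ∧ ∀ δ : ℝ, δ ∈ Set.Ioo 0 δ₀ →
      ∃ C : ℝ, 0 < C ∧ ∃ X₀ : ℝ, ∀ X : ℝ, X₀ ≤ X →
        ∑ d ∈ Finset.Icc 1 ⌊X ^ ((5 : ℝ) / 9) * X ^ ((1 : ℝ) / 1000)⌋₊,
            (d : ℝ) * (∑ m ∈ (Finset.Icc 1 ⌊X ^ ((5 : ℝ) / 9) * X ^ ((1 : ℝ) / 1000)⌋₊).filter
                (fun m => d ∣ m),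
              alphaMinus (X ^ δ) (X ^ ((5 : ℝ) / 36)) (X ^ ((5 : ℝ) / 9))
                  (X ^ ((1 : ℝ) / 1000)) m / m) ^ 2 ≤
          C / Real.log X := by
  obtain ⟨K, hK, hR⟩ := R_bound
  obtain ⟨c, hc, hlow⟩ := VV_lower
  refine ⟨1/100000, by norm_num, ?_⟩
  rintro δ ⟨hδ0, hδ1⟩
  refine ⟨9 * ((1 / (c * δ))^4 * (K / δ)), by positivity, Real.exp (2/δ), ?_⟩
  intro X hX
  have hX0 : 0 < X := (Real.exp_pos _).trans_le hX
  have hL2 : 2/δ ≤ Real.log X := (Real.le_log_iff_exp_le hX0).2 hX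
  have hL : 0 < Real.log X := lt_of_lt_of_le (by positivity) hL2
  have hX1 : 1 ≤ X := by
    by_contra h
    have := Real.log_nonpos hX0.le (by linarith : X ≤ 1)
    linarith
  have hδL : 2 ≤ δ * Real.log X := by
    rw [div_le_iff₀ hδ0] at hL2; linarith
  set w := X ^ δ with hw
  set z := X ^ ((5:ℝ)/36) with hz
  set D := X ^ ((5:ℝ)/9) with hD
  set E := X ^ ((1:ℝ)/1000) with hE
  have hwz : w ≤ z := Real.rpow_le_rpow_of_exponent_le hX1 (by linarith)
  have hwE : w ≤ E := Real.rpow_le_rpow_of_exponent_le hX1 (by linarith)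
  have hzD : z ≤ D := Real.rpow_le_rpow_of_exponent_le hX1 (by norm_num)
  have hE1 : 1 ≤ E := Real.one_le_rpow hX1 (by norm_num)
  have hD1 : 1 ≤ D := Real.one_le_rpow hX1 (by norm_num)
  have hlw : Real.log w = δ * Real.log X := Real.log_rpow hX0 _
  have hlz : Real.log z = 5/36 * Real.log X := Real.log_rpow hX0 _
  have hlE : Real.log E = 1/1000 * Real.log X := Real.log_rpow hX0 _
  have hw3 : 3 ≤ w := by
    have hw0 : 0 < w := Real.rpow_pos_of_pos hX0 _
    have := Real.log_le_sub_one_of_pos hw0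
    linarith
  obtain ⟨hM2, hMl, hMu⟩ := log_ceil_bounds w hw3
  obtain ⟨hN2, hNl, hNu⟩ := log_ceil_bounds z (hw3.trans hwz)
  have hMN : ⌈w⌉₊ ≤ ⌈z⌉₊ := Nat.ceil_mono hwz
  set M := ⌈w⌉₊ with hM
  set N := ⌈z⌉₊ with hN
  rw [hlw] at hMl hMu
  rw [hlz] at hNl hNu
  have hlM : 0 < Real.log M := by linarith
  have hlN : 0 < Real.log N := by nlinarith
  have hratio : VV M / VV N ≤ 1 / (c * δ) := by
    rw [div_le_iff₀ (VV_pos N)]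
    calc VV M ≤ 1 / Real.log M := VV_upper M hM2
      _ ≤ 1 / (δ * Real.log X) := one_div_le_one_div_of_le (by positivity) hMl
      _ = 1 / (c * δ) * (c / Real.log X) := by field_simp
      _ ≤ 1 / (c * δ) * (c / Real.log N) := by
          have h1 : Real.log N ≤ Real.log X := by linarith
          have h2 : c / Real.log X ≤ c / Real.log N := div_le_div_of_nonneg_left hc.le hlN h1
          exact mul_le_mul_of_nonneg_left h2 (by positivity)
      _ ≤ _ := by
          gcongr
          exact hlow N hN2
  set U := Nat.primesBelow M with hU
  set W := (Nat.primesBelow N).filter (M ≤ ·) with hW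
  have hLb : ∀ odd, MS W (lamw D odd) ≤ (1 / (c * δ))^4 := by
    intro odd
    refine (L_bound M N hMN (lamw D odd) (lamw_abs D odd)).trans ?_
    have := VV_pos M
    have := VV_pos N
    gcongr
  have hRb : ∀ odd, MS U (rho E odd) ≤ K / δ / Real.log X := by
    intro odd
    refine (hR M hM2 E (by linarith) ?_ odd).trans ?_
    · rw [hlE]; nlinarith
    · rw [div_div]
      gcongr
  have hprod : ∀ o1 o2, MS W (lamw D o1) * MS U (rho E o2) ≤ (1 / (c * δ))^4 * (K / δ / Real.log X) :=
    fun o1 o2 => mul_le_mul (hLb o1) (hRb o2) (MS_nonneg _ _) (by positivity)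
  refine (sum_le_MS w z D E hwz hE1 hD1 hwE hzD).trans ?_
  refine (MS_bilinear U W (UW_disj w z) _ (lamw D true) (lamw D false) (rho E true) (rho E false) ?_).trans ?_
  · intro A hA B hB
    exact alpha_prod w z D E hwz A B hA hB
  · have a := hprod true false
    have b := hprod false true
    have d := hprod true true
    calc _ ≤ 3 * ((1 / (c * δ))^4 * (K / δ / Real.log X) + (1 / (c * δ))^4 * (K / δ / Real.log X)
          + (1 / (c * δ))^4 * (K / δ / Real.log X)) := by linarith
      _ = _ := by ring
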